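/- arXiv:1810.07283 — 2 statements merged into one kernel-verified Lean document; each statement's English description precedes it below -/
import Mathlib

section
/- Let k ≥ 2, ε > 0 and u ≥ 1. For every scheme Q ∈ D_{ε,E} (i.e., every ε-locally differentially private scheme with finite output alphabet whose conditional probability ratios Q(y|x)/min_{x'} Q(y|x') take only the values 1 and e^ε), liminf_{n→∞} n^{u/2} r_{k,n}^{ℓ_u^u}(Q) ≥ k C_u M(k,ε)^{u/2}. -/
/-!
The bound is a local asymptotic Bayes bound around the uniform law. Write
`p_w = 1/k + (w - m)/√n` for `w ∈ ℝ^k`, with `m` the mean of the entries, and give the entries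
of `w` independent priors `N(0, ζ⁻¹)`. The worst-case risk is at least the integral of the risk at
`p_w` over those `w` for which `p_w` is a probability vector.

To bound the contribution of coordinate `i`, freeze all other coordinates of `w`. The output law
then runs through a one-dimensional family `q_l + (a_l + t b_l)/√n` with
`b_l = q_{li} - q_l`, and the rescaled loss has the form `|e - c t|^u` with `c = (k-1)/k`
(`slice_bound`). The log-likelihood is quadratic in `t` up to `O(n^{-1/2})` on bounded sets
(`prod_one_add_bounds`), so the posterior of `t` is, up to factors `e^{±δ}`, Gaussian with precision
`ζ` plus the empirical information (`likelihood_sandwich`). Since `u ≥ 1` makes the loss convex,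
Anderson's inequality says that no estimate beats the posterior mean, which costs `c^u C_u` times
the precision to the power `-u/2` (`anderson`, `bayes_sandwich`). Chebyshev's inequality shows that
the empirical information is at most `J_i + ζ` and the posterior mean bounded for most
observations, where `J_i = ∑_l (q_{li} - q_l)² / q_l` (`good_prob`); no central limit theorem is
needed. This gives `c^u C_u J_i^{-u/2}` in the limit, uniformly in the estimator (`bayes_slice`,
`coord_bound`).

In an extremal scheme, a row with `d` large entries has explicit mean and variance, and with
`g(d) = (d e^ε + k - d)²/(d(k - d))` optimality of `d*` yields
`∑_i J_i ≤ k (e^ε - 1)² / g(d*)` (`info_le`). Jensen's inequality for `x ↦ x^{-u/2}` bounds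
`∑_i J_i^{-u/2}` from below (`jensen_rpow_neg`), and letting `ζ → 0` gives the constant
`k C_u M(k, ε)^{u/2}`.
-/

open MeasureTheory ProbabilityTheory Filter Real
open scoped ENNReal NNReal

noncomputable section

/-- The probability simplex Δ_k ⊆ ℝ^k. -/
def simplex (k : ℕ) : Set (Fin k → ℝ) :=
  {p | (∀ i, 0 ≤ p i) ∧ ∑ i, p i = 1}

/-- ε-local differential privacy for a Markov kernel from `Fin k` to `Y`. -/
def IsPrivate {Y : Type} [MeasurableSpace Y] {k : ℕ} (ε : ℝ) (Q : Kernel (Fin k) Y) : Prop :=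
  IsMarkovKernel Q ∧
    ∀ S : Set Y, MeasurableSet S → ∀ x x' : Fin k,
      Q x S ≤ ENNReal.ofReal (Real.exp ε) * Q x' S

/-- The marginal distribution m = pQ of a privatized sample. -/
def marginal {Y : Type} [MeasurableSpace Y] {k : ℕ} (Q : Kernel (Fin k) Y)
    (p : Fin k → ℝ) : Measure Y :=
  ∑ i, ENNReal.ofReal (p i) • Q i

/-- Worst-case ℓ_u^u risk of the mechanism `Q` with estimator `est` from `n` samples. -/
def risk {Y : Type} [MeasurableSpace Y] (k n : ℕ) (u : ℝ) (Q : Kernel (Fin k) Y)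
    (est : (Fin n → Y) → Fin k → ℝ) : ℝ≥0∞ :=
  ⨆ p ∈ simplex k,
    ∫⁻ y, ENNReal.ofReal (∑ i, |est y i - p i| ^ u)
      ∂(Measure.pi fun _ : Fin n => marginal Q p)

/-- Minimax ℓ_u^u risk of the mechanism `Q` from `n` samples. -/
def minimaxRisk {Y : Type} [MeasurableSpace Y] (k n : ℕ) (u : ℝ) (Q : Kernel (Fin k) Y) : ℝ≥0∞ :=
  ⨅ (est : (Fin n → Y) → Fin k → ℝ) (_ : Measurable est), risk k n u Q est

/-- Output alphabet Y_{k,d} : subsets of {1,…,k} of size d. -/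
def Out (k d : ℕ) : Type := {S : Finset (Fin k) // S.card = d}

instance (k d : ℕ) : Fintype (Out k d) := Subtype.fintype _
instance (k d : ℕ) : MeasurableSpace (Out k d) := ⊤
instance (k d : ℕ) : MeasurableSingletonClass (Out k d) := ⟨fun _ => trivial⟩
instance (k d : ℕ) : DecidableEq (Out k d) := Subtype.instDecidableEq

/-- Q_{k,ε,d}(y|i). -/
def schemeP (k : ℕ) (ε : ℝ) (d : ℕ) (i : Fin k) (y : Out k d) : ℝ :=
  (if i ∈ y.1 then Real.exp ε else 1) /
    ((k-1).choose (d-1) * Real.exp ε + (k-1).choose d)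

/-- The scheme Q_{k,ε,d} as a Markov kernel. -/
def schemeKernel (k : ℕ) (ε : ℝ) (d : ℕ) : Kernel (Fin k) (Out k d) :=
  Kernel.ofFunOfCountable fun i =>
    ∑ y : Out k d, ENNReal.ofReal (schemeP k ε d i y) • Measure.dirac y

/-- Constant A of the empirical estimator. -/
def Aconst (k d : ℕ) (ε : ℝ) : ℝ :=
  (((k:ℝ)-1) * Real.exp ε + ((k:ℝ)-1)*((k:ℝ)-d)/d) / (((k:ℝ)-d)*(Real.exp ε - 1))

/-- Constant B of the empirical estimator. -/
def Bconst (k d : ℕ) (ε : ℝ) : ℝ :=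
  (((d:ℝ)-1) * Real.exp ε + ((k:ℝ)-d)) / (((k:ℝ)-d)*(Real.exp ε - 1))

/-- t_i(y^n): the number of privatized samples whose i-th coordinate is 1. -/
def tcount {k d n : ℕ} (i : Fin k) (y : Fin n → Out k d) : ℕ :=
  (Finset.univ.filter fun j => i ∈ (y j).1).card

/-- The empirical estimator p̂ under Q_{k,ε,d}. -/
def empEst (k d n : ℕ) (ε : ℝ) (y : Fin n → Out k d) (i : Fin k) : ℝ :=
  Aconst k d ε * ((tcount i y : ℝ) / n) - Bconst k d ε

/-- Marginal probability (pQ_{k,ε,d})(y). -/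
def margP (k : ℕ) (ε : ℝ) (d : ℕ) (p : Fin k → ℝ) (y : Out k d) : ℝ :=
  ∑ i, p i * schemeP k ε d i y

/-- Membership in D_{ε,E}: a finite-output ε-LDP scheme, given by the matrix
`q j v = Q(j|v)`, whose conditional probability ratios take only values 1 and e^ε. -/
def memDEE (k L : ℕ) (ε : ℝ) (q : Fin L → Fin k → ℝ) : Prop :=
  (∀ j v, 0 ≤ q j v) ∧ (∀ v, ∑ j, q j v = 1) ∧
  (∀ j v v', q j v ≤ Real.exp ε * q j v') ∧
  (∀ j v, q j v / (⨅ v', q j v') ∈ ({1, Real.exp ε} : Set ℝ))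

/-- q_j = (1/k) Σ_v q_{jv}. -/
def qrow {k L : ℕ} (q : Fin L → Fin k → ℝ) (j : Fin L) : ℝ :=
  (1/(k:ℝ)) * ∑ v, q j v

/-- A finite-output scheme (matrix) as a Markov kernel. -/
def matKernel (k L : ℕ) (q : Fin L → Fin k → ℝ) : Kernel (Fin k) (Fin L) :=
  Kernel.ofFunOfCountable fun v =>
    ∑ j, ENNReal.ofReal (q j v) • Measure.dirac j

/-- C_u = E|X|^u for X standard normal. -/
def Cmom (u : ℝ) : ℝ := ∫ x, |x| ^ u ∂(gaussianReal 0 1)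

/-- g(s) = (s e^ε + k − s)² / (s(k−s)). -/
def gfun (ε k s : ℝ) : ℝ := (s * Real.exp ε + k - s)^2 / (s * (k - s))

/-- d* is a minimizer of (d e^ε + k − d)²/(d(k−d)) over d ∈ {1,…,k−1}. -/
def IsOptDstar (k : ℕ) (ε : ℝ) (dstar : ℕ) : Prop :=
  dstar ∈ Finset.Icc 1 (k-1) ∧
    ∀ d ∈ Finset.Icc 1 (k-1), gfun ε k dstar ≤ gfun ε k d

/-- M(k,ε). -/
def Mconst (k : ℕ) (ε : ℝ) (dstar : ℕ) : ℝ :=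
  (((k:ℝ)-1)^2 / ((k:ℝ)^2 * (Real.exp ε - 1)^2)) * gfun ε k dstar

/-- The prior set P_n = {p ∈ Δ_k : ‖p − p_U‖₂ ≤ D/√n}. -/
def Pball (k : ℕ) (D : ℝ) (n : ℕ) : Set (Fin k → ℝ) :=
  {p | p ∈ simplex k ∧ Real.sqrt (∑ i, (p i - 1/(k:ℝ))^2) ≤ D / Real.sqrt n}

/-- The uniform distribution on P_n: normalized (k−1)-dimensional Hausdorff measure. -/
def unifP (k : ℕ) (D : ℝ) (n : ℕ) : Measure (Fin k → ℝ) :=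
  ((μH[((k:ℝ)-1)]) (Pball k D n))⁻¹ • (μH[((k:ℝ)-1)]).restrict (Pball k D n)

/-- Component-wise optimal Bayes ℓ_u^u risk for the finite-output scheme `q`,
with the uniform prior on P_n. -/
def bayesRisk (k L : ℕ) (u : ℝ) (q : Fin L → Fin k → ℝ) (D : ℝ) (n : ℕ) (i : Fin k) : ℝ≥0∞ :=
  ⨅ est : (Fin n → Fin L) → ℝ,
    ∫⁻ p, (∑ y : Fin n → Fin L,
        (∏ j, ENNReal.ofReal (∑ v, p v * q (y j) v)) *
          ENNReal.ofReal (|est y - p i| ^ u))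
      ∂(unifP k D n)

end

open scoped Topology

/-! ### Truncated Gaussian moments and Anderson's inequality -/

/-- The truncated absolute moment `E[|X|^u ; |X| ≤ S]` of a standard normal `X`, valued in `ℝ≥0∞`. -/
noncomputable def gaussTrunc (u S : ℝ) : ℝ≥0∞ :=
  ∫⁻ x in {x : ℝ | |x| ≤ S}, ENNReal.ofReal (|x| ^ u) ∂gaussianReal 0 1

lemma integrable_abs_rpow_gaussian {u : ℝ} (hu : 0 ≤ u) :
    Integrable (fun x : ℝ => |x| ^ u) (gaussianReal 0 1) := by
  have h := (memLp_id_gaussianReal (μ := 0) (v := 1) (u.toNNReal)).integrable_norm_rpow'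
  simpa [Real.coe_toNNReal u hu] using h

lemma gaussTrunc_tendsto {u : ℝ} (hu : 0 ≤ u) :
    Tendsto (fun N : ℕ => gaussTrunc u N) atTop (𝓝 (ENNReal.ofReal (Cmom u))) := by
  have h1 : ENNReal.ofReal (Cmom u) = ∫⁻ x, ENNReal.ofReal (|x| ^ u) ∂gaussianReal 0 1 := by
    unfold Cmom
    exact ofReal_integral_eq_lintegral_ofReal (integrable_abs_rpow_gaussian hu)
      (ae_of_all _ fun x => by positivity)
  have hU : (⋃ N : ℕ, {x : ℝ | |x| ≤ (N : ℝ)}) = Set.univ := by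
    ext x; simpa using exists_nat_ge |x|
  have hm : Monotone fun N : ℕ => {x : ℝ | |x| ≤ (N : ℝ)} := by
    intro a b hab x hx
    exact le_trans (Set.mem_ofPred.mp hx) (by exact_mod_cast hab)
  have h2 := tendsto_measure_iUnion_atTop (μ := (gaussianReal 0 1).withDensity
    fun x => ENNReal.ofReal (|x| ^ u)) hm
  rw [hU, withDensity_apply _ MeasurableSet.univ, Measure.restrict_univ, ← h1] at h2
  refine h2.congr fun N => ?_
  simp only [Function.comp, gaussTrunc]
  rw [withDensity_apply]
  exact measurableSet_le (by fun_prop) (by fun_prop)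

lemma gaussTrunc_mono {u S S' : ℝ} (h : S ≤ S') : gaussTrunc u S ≤ gaussTrunc u S' :=
  lintegral_mono_set fun _ hx => le_trans hx h

lemma Cmom_nonneg (u : ℝ) : 0 ≤ Cmom u := integral_nonneg fun x => by positivity

/-- Truncating at a large enough level loses only a fraction `ζ` of the moment `C_u`. -/
lemma exists_gaussTrunc {u ζ : ℝ} (hu : 0 ≤ u) (hζ : 0 < ζ) :
    ∃ S : ℝ, 0 ≤ S ∧ ENNReal.ofReal ((1 - ζ) * Cmom u) ≤ gaussTrunc u S := by
  rcases (Cmom_nonneg u).eq_or_lt with h0 | h0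
  · exact ⟨0, le_rfl, by simp [← h0]⟩
  · have hlt : ENNReal.ofReal ((1 - ζ) * Cmom u) < ENNReal.ofReal (Cmom u) := by
      rw [ENNReal.ofReal_lt_ofReal_iff h0]; nlinarith
    obtain ⟨N, hN⟩ := ((gaussTrunc_tendsto hu).eventually (lt_mem_nhds hlt)).exists
    exact ⟨N, by positivity, hN.le⟩

/-- The truncated moment of the unnormalised centred Gaussian of precision `κ`, in terms of the
standard one. -/
lemma lintegral_trunc_scaled {u κ S : ℝ} (hκ : 0 < κ) :
    ∫⁻ s in {s : ℝ | |s| ≤ S}, ENNReal.ofReal (exp (-κ * s ^ 2 / 2)) * ENNReal.ofReal (|s| ^ u) =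
      ENNReal.ofReal (κ ^ (-(u / 2))) * gaussTrunc u (√κ * S) *
        ∫⁻ s : ℝ, ENNReal.ofReal (exp (-κ * s ^ 2 / 2)) := by
  set v : ℝ≥0 := ⟨κ⁻¹, by positivity⟩ with hv
  have hvr : (v : ℝ) = κ⁻¹ := rfl
  have hv0 : v ≠ 0 := by
    intro h; have h' := congrArg NNReal.toReal h; rw [hvr] at h'; exact (inv_pos.2 hκ).ne' h'
  have hsq : (0:ℝ) < √(2 * π * v) := by rw [hvr]; positivity
  have hpdf : ∀ s : ℝ, ENNReal.ofReal (exp (-κ * s ^ 2 / 2)) =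
      ENNReal.ofReal (√(2 * π * v)) * gaussianPDF 0 v s := by
    intro s
    rw [gaussianPDF, ← ENNReal.ofReal_mul hsq.le, gaussianPDFReal, ← mul_assoc,
      mul_inv_cancel₀ hsq.ne', one_mul, hvr]
    congr 2
    field_simp
    ring
  have hms : MeasurableSet {s : ℝ | |s| ≤ S} := measurableSet_le (by fun_prop) (by fun_prop)
  have htot : ∫⁻ s : ℝ, ENNReal.ofReal (exp (-κ * s ^ 2 / 2)) = ENNReal.ofReal (√(2 * π * v)) := by
    simp_rw [hpdf]
    rw [lintegral_const_mul _ (measurable_gaussianPDF 0 v), lintegral_gaussianPDF_eq_one 0 hv0,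
      mul_one]
  have hmeas : Measurable fun s : ℝ => ENNReal.ofReal (|s| ^ u) := by fun_prop
  have hmap : gaussianReal 0 v = (gaussianReal 0 1).map (fun x => (√κ)⁻¹ * x) := by
    rw [gaussianReal_map_const_mul]
    congr 1
    · simp
    · ext; simp [hvr, Real.sq_sqrt hκ.le]
  have hscale : ∫⁻ s in {s : ℝ | |s| ≤ S}, ENNReal.ofReal (|s| ^ u) ∂gaussianReal 0 v =
      ENNReal.ofReal (κ ^ (-(u / 2))) * gaussTrunc u (√κ * S) := by
    have hsκ : 0 < √κ := by positivity
    rw [hmap, setLIntegral_map hms hmeas (by fun_prop), gaussTrunc,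
      ← lintegral_const_mul _ hmeas]
    have hset : (fun x => (√κ)⁻¹ * x) ⁻¹' {s : ℝ | |s| ≤ S} = {x : ℝ | |x| ≤ √κ * S} := by
      ext x
      simp only [Set.mem_preimage, Set.mem_ofPred_eq, abs_mul, abs_inv, abs_of_pos hsκ]
      rw [inv_mul_le_iff₀ hsκ]
    rw [hset]
    refine lintegral_congr fun x => ?_
    rw [← ENNReal.ofReal_mul (by positivity), abs_mul, abs_of_pos (inv_pos.2 hsκ),
      Real.mul_rpow (by positivity) (by positivity), Real.sqrt_eq_rpow, ← Real.rpow_neg hκ.le,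
      ← Real.rpow_mul hκ.le]
    congr 3
    ring
  have hpdfS : ∫⁻ s in {s : ℝ | |s| ≤ S}, gaussianPDF 0 v s * ENNReal.ofReal (|s| ^ u) =
      ∫⁻ s in {s : ℝ | |s| ≤ S}, ENNReal.ofReal (|s| ^ u) ∂gaussianReal 0 v := by
    rw [gaussianReal_of_var_ne_zero 0 hv0,
      setLIntegral_withDensity_eq_setLIntegral_mul _ (measurable_gaussianPDF 0 v) hmeas hms]
    rfl
  rw [htot, ← hscale, ← hpdfS, mul_comm, ← lintegral_const_mul _ (by fun_prop)]
  refine lintegral_congr fun s => ?_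
  rw [hpdf, mul_assoc]

/-- Anderson's inequality on a symmetric window: for a symmetric weight and a convex power loss the
best estimate is the centre. The average of `|e + c s|^u` and `|e - c s|^u` is at least
`|c s|^u`, so neither unimodality nor normalisation of the weight is needed. -/
lemma anderson {u c S e : ℝ} (hu : 1 ≤ u) {Φ : ℝ → ℝ≥0∞} (hΦ : Measurable Φ)
    (hsymm : ∀ s, Φ (-s) = Φ s) :
    ∫⁻ s in {s : ℝ | |s| ≤ S}, Φ s * ENNReal.ofReal (|c * s| ^ u) ≤
      ∫⁻ s in {s : ℝ | |s| ≤ S}, Φ s * ENNReal.ofReal (|e - c * s| ^ u) := by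
  have hms : MeasurableSet {s : ℝ | |s| ≤ S} := measurableSet_le (by fun_prop) (by fun_prop)
  have hrefl : ∫⁻ s in {s : ℝ | |s| ≤ S}, Φ s * ENNReal.ofReal (|e + c * s| ^ u) =
      ∫⁻ s in {s : ℝ | |s| ≤ S}, Φ s * ENNReal.ofReal (|e - c * s| ^ u) := by
    rw [← lintegral_indicator hms, ← lintegral_indicator hms, ← lintegral_neg_eq_self]
    refine lintegral_congr fun s => ?_
    simp only [Set.indicator, Set.mem_ofPred_eq, abs_neg, hsymm, mul_neg,
      ← sub_eq_add_neg]
  have hpt : ∀ s : ℝ, 2 * ENNReal.ofReal (|c * s| ^ u) ≤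
      ENNReal.ofReal (|e + c * s| ^ u) + ENNReal.ofReal (|e - c * s| ^ u) := by
    intro s
    rw [← ENNReal.ofReal_add (by positivity) (by positivity),
      show (2 : ℝ≥0∞) = ENNReal.ofReal 2 by simp, ← ENNReal.ofReal_mul (by norm_num)]
    apply ENNReal.ofReal_le_ofReal
    have hcv := (convexOn_rpow hu).2 (Set.mem_Ici.2 (abs_nonneg (e + c * s)))
      (Set.mem_Ici.2 (abs_nonneg (e - c * s)))
      (by norm_num : (0:ℝ) ≤ 1 / 2) (by norm_num : (0:ℝ) ≤ 1 / 2) (by norm_num)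
    simp only [smul_eq_mul] at hcv
    have htri : |c * s| ≤ 1 / 2 * |e + c * s| + 1 / 2 * |e - c * s| := by
      have := abs_sub (e + c * s) (e - c * s)
      rw [show e + c * s - (e - c * s) = 2 * (c * s) by ring, abs_mul, abs_two] at this
      linarith
    have := Real.rpow_le_rpow (abs_nonneg _) htri (by linarith : (0:ℝ) ≤ u)
    linarith
  have h2 : 2 * ∫⁻ s in {s : ℝ | |s| ≤ S}, Φ s * ENNReal.ofReal (|c * s| ^ u) ≤
      2 * ∫⁻ s in {s : ℝ | |s| ≤ S}, Φ s * ENNReal.ofReal (|e - c * s| ^ u) := by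
    rw [← lintegral_const_mul _ (by fun_prop)]
    rw [two_mul (∫⁻ s in {s : ℝ | |s| ≤ S}, Φ s * ENNReal.ofReal (|e - c * s| ^ u))]
    nth_rewrite 1 [← hrefl]
    rw [← lintegral_add_left (by fun_prop)]
    refine lintegral_mono fun s => ?_
    rw [← mul_add, mul_left_comm]
    gcongr
    exact hpt s
  exact (ENNReal.mul_le_mul_iff_right (by norm_num) (by norm_num)).1 h2

/-- Bayes lower bound for one posterior: `F` is an unnormalised posterior density which on
`|t| ≤ T` lies within factors `e^{±δ}` of a multiple of the Gaussian of mean `μ` and precision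
`κ`. The loss is bounded below on the window `|t - μ| ≤ T / 2`, where Anderson's inequality
applies; there the cost of any estimate `e` of `c t` is at least `c^u κ^{-u/2}` times a truncated
standard moment. The bounds `η ≤ κ ≤ κ₁` make the result independent of `κ`. -/
lemma bayes_sandwich {u c η κ κ₁ T μ δ e : ℝ} (hu : 1 ≤ u) (hc : 0 ≤ c) (hη : 0 < η)
    (hηκ : η ≤ κ) (hκ₁ : κ ≤ κ₁) (hT : 0 ≤ T) (hμ : |μ| ≤ T / 2) {K : ℝ≥0∞} {F : ℝ → ℝ≥0∞}
    (hlow : ∀ t, |t| ≤ T →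
      ENNReal.ofReal (exp (-δ)) * K * ENNReal.ofReal (exp (-κ * (t - μ) ^ 2 / 2)) ≤ F t)
    (hup : ∀ t, |t| ≤ T →
      F t ≤ ENNReal.ofReal (exp δ) * K * ENNReal.ofReal (exp (-κ * (t - μ) ^ 2 / 2))) :
    ENNReal.ofReal (exp (-(2 * δ)) * c ^ u * κ₁ ^ (-(u / 2))) * gaussTrunc u (√η * (T / 2)) *
        ∫⁻ t in {t : ℝ | |t| ≤ T}, F t ≤
      ∫⁻ t in {t : ℝ | |t| ≤ T}, F t * ENNReal.ofReal (|e - c * t| ^ u) := by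
  have hκ : 0 < κ := hη.trans_le hηκ
  have hms : ∀ S : ℝ, MeasurableSet {s : ℝ | |s| ≤ S} :=
    fun S => measurableSet_le (by fun_prop) (by fun_prop)
  set Z : ℝ≥0∞ := ∫⁻ s : ℝ, ENNReal.ofReal (exp (-κ * s ^ 2 / 2)) with hZ
  have hmass : ∫⁻ t in {t : ℝ | |t| ≤ T}, F t ≤ ENNReal.ofReal (exp δ) * K * Z := by
    calc ∫⁻ t in {t : ℝ | |t| ≤ T}, F t
        ≤ ∫⁻ t in {t : ℝ | |t| ≤ T},
          ENNReal.ofReal (exp δ) * K * ENNReal.ofReal (exp (-κ * (t - μ) ^ 2 / 2)) :=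
          setLIntegral_mono (by fun_prop) fun t ht => hup t ht
      _ ≤ ∫⁻ t : ℝ, ENNReal.ofReal (exp δ) * K *
            ENNReal.ofReal (exp (-κ * (t - μ) ^ 2 / 2)) := setLIntegral_le_lintegral _ _
      _ = ENNReal.ofReal (exp δ) * K * Z := by
          rw [lintegral_const_mul _ (by fun_prop), hZ,
            lintegral_sub_right_eq_self (fun s => ENNReal.ofReal (exp (-κ * s ^ 2 / 2))) μ]
  have hwin : ∫⁻ s in {s : ℝ | |s| ≤ T / 2},
        ENNReal.ofReal (exp (-κ * s ^ 2 / 2)) * ENNReal.ofReal (|(e - c * μ) - c * s| ^ u) ≤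
      ∫⁻ t in {t : ℝ | |t| ≤ T}, ENNReal.ofReal (exp (-κ * (t - μ) ^ 2 / 2)) *
        ENNReal.ofReal (|e - c * t| ^ u) := by
    rw [← lintegral_indicator (hms _), ← lintegral_indicator (hms _),
      ← lintegral_sub_right_eq_self _ μ]
    refine lintegral_mono fun t => ?_
    simp only [Set.indicator, Set.mem_ofPred_eq]
    split_ifs with h1 h2
    · rw [show e - c * μ - c * (t - μ) = e - c * t by ring]
    · exfalso
      apply h2
      have := abs_add_le (t - μ) μ
      rw [sub_add_cancel] at this
      linarith
    · exact bot_le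
    · exact le_rfl
  have hgauss : ENNReal.ofReal (c ^ u * κ₁ ^ (-(u / 2))) * gaussTrunc u (√η * (T / 2)) * Z ≤
      ∫⁻ s in {s : ℝ | |s| ≤ T / 2},
        ENNReal.ofReal (exp (-κ * s ^ 2 / 2)) * ENNReal.ofReal (|c * s| ^ u) := by
    have h1 : ∀ s : ℝ, ENNReal.ofReal (exp (-κ * s ^ 2 / 2)) * ENNReal.ofReal (|c * s| ^ u) =
        ENNReal.ofReal (c ^ u) *
          (ENNReal.ofReal (exp (-κ * s ^ 2 / 2)) * ENNReal.ofReal (|s| ^ u)) := by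
      intro s
      rw [abs_mul, abs_of_nonneg hc, Real.mul_rpow hc (abs_nonneg _),
        ENNReal.ofReal_mul (by positivity)]
      ring
    simp_rw [h1]
    rw [lintegral_const_mul _ (by fun_prop), lintegral_trunc_scaled hκ,
      ENNReal.ofReal_mul (by positivity), ← hZ, mul_assoc, mul_assoc, mul_assoc]
    have hg : gaussTrunc u (√η * (T / 2)) ≤ gaussTrunc u (√κ * (T / 2)) :=
      gaussTrunc_mono (by gcongr)
    have hr : ENNReal.ofReal (κ₁ ^ (-(u / 2))) ≤ ENNReal.ofReal (κ ^ (-(u / 2))) :=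
      ENNReal.ofReal_le_ofReal
        (Real.rpow_le_rpow_of_nonpos hκ hκ₁ (by linarith))
    exact mul_le_mul_right (mul_le_mul' hr (mul_le_mul_left hg _)) _
  calc ENNReal.ofReal (exp (-(2 * δ)) * c ^ u * κ₁ ^ (-(u / 2))) *
          gaussTrunc u (√η * (T / 2)) * ∫⁻ t in {t : ℝ | |t| ≤ T}, F t
      ≤ ENNReal.ofReal (exp (-(2 * δ)) * c ^ u * κ₁ ^ (-(u / 2))) *
          gaussTrunc u (√η * (T / 2)) * (ENNReal.ofReal (exp δ) * K * Z) := by gcongr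
    _ = ENNReal.ofReal (exp (-δ)) * K * (ENNReal.ofReal (c ^ u * κ₁ ^ (-(u / 2))) *
          gaussTrunc u (√η * (T / 2)) * Z) := by
        rw [mul_assoc (exp (-(2 * δ))), ENNReal.ofReal_mul (exp_pos _).le]
        have : ENNReal.ofReal (exp (-δ)) =
            ENNReal.ofReal (exp (-(2 * δ))) * ENNReal.ofReal (exp δ) := by
          rw [← ENNReal.ofReal_mul (exp_pos _).le, ← exp_add]; congr 2; ring
        rw [this]; ring
    _ ≤ ENNReal.ofReal (exp (-δ)) * K * ∫⁻ t in {t : ℝ | |t| ≤ T},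
          ENNReal.ofReal (exp (-κ * (t - μ) ^ 2 / 2)) * ENNReal.ofReal (|e - c * t| ^ u) := by
        gcongr
        refine hgauss.trans ((anderson hu (by fun_prop) fun s => by rw [neg_sq]).trans hwin)
    _ = ∫⁻ t in {t : ℝ | |t| ≤ T}, ENNReal.ofReal (exp (-δ)) * K *
          (ENNReal.ofReal (exp (-κ * (t - μ) ^ 2 / 2)) * ENNReal.ofReal (|e - c * t| ^ u)) := by
        rw [lintegral_const_mul _ (by fun_prop)]
    _ ≤ ∫⁻ t in {t : ℝ | |t| ≤ T}, F t * ENNReal.ofReal (|e - c * t| ^ u) := by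
        refine setLIntegral_mono' (hms _) fun t ht => ?_
        rw [← mul_assoc]
        gcongr
        exact hlow t ht

/-! ### Product likelihoods and discrete product laws -/

/-- Second-order Taylor bound for the logarithm. -/
lemma abs_log_quad {z r : ℝ} (hz : |z| ≤ r) (hr : r ≤ 1 / 2) :
    |log (1 + z) - (z - z ^ 2 / 2)| ≤ 2 * r ^ 3 := by
  have h := Real.abs_log_sub_add_sum_range_le (x := -z) (by rw [abs_neg]; linarith) 2
  simp only [Finset.sum_range_succ, Finset.sum_range_zero, abs_neg] at h
  norm_num at h
  have h0 := abs_nonneg z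
  have h1 : |z| ^ 3 / (1 - |z|) ≤ 2 * r ^ 3 := by
    rw [div_le_iff₀ (by linarith)]
    have : |z| ^ 3 ≤ r ^ 3 := pow_le_pow_left₀ h0 hz 3
    nlinarith [pow_nonneg (h0.trans hz) 3]
  calc |log (1 + z) - (z - z ^ 2 / 2)| = |-z + z ^ 2 / 2 + log (1 + z)| := by congr 1; ring
    _ ≤ _ := h.trans h1

/-- Quadratic expansion of a product likelihood. For `r` of order `n^{-1/2}` the error `2 n r³` in
the exponent tends to zero. -/
lemma prod_one_add_bounds {n : ℕ} (z : Fin n → ℝ) {r : ℝ} (hz : ∀ j, |z j| ≤ r)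
    (hr : r ≤ 1 / 2) :
    exp (-(2 * n * r ^ 3)) * exp (∑ j, (z j - z j ^ 2 / 2)) ≤ ∏ j, (1 + z j) ∧
    ∏ j, (1 + z j) ≤ exp (2 * n * r ^ 3) * exp (∑ j, (z j - z j ^ 2 / 2)) := by
  have hpos : ∀ j, 0 < 1 + z j := fun j => by have := (abs_le.1 (hz j)).1; linarith
  have hprod : ∏ j, (1 + z j) = exp (∑ j, log (1 + z j)) := by
    rw [Real.exp_sum]
    exact Finset.prod_congr rfl fun j _ => (Real.exp_log (hpos j)).symm
  have hb : |∑ j, log (1 + z j) - ∑ j, (z j - z j ^ 2 / 2)| ≤ 2 * n * r ^ 3 := by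
    rw [← Finset.sum_sub_distrib]
    refine (Finset.abs_sum_le_sum_abs _ _).trans ?_
    refine (Finset.sum_le_sum fun j _ => abs_log_quad (hz j) hr).trans ?_
    simp; linarith
  obtain ⟨h1, h2⟩ := abs_le.1 hb
  rw [hprod, ← exp_add, ← exp_add, exp_le_exp, exp_le_exp]
  constructor <;> linarith

/-- The law on `Fin L` with weights `m`; negative weights are read as `0`. -/
noncomputable def wMeas {L : ℕ} (m : Fin L → ℝ) : Measure (Fin L) :=
  ∑ l, ENNReal.ofReal (m l) • Measure.dirac l

lemma wMeas_singleton {L : ℕ} (m : Fin L → ℝ) (l : Fin L) :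
    wMeas m {l} = ENNReal.ofReal (m l) := by
  classical
  simp [wMeas, Measure.finsetSum_apply, Set.indicator]

lemma wMeas_isProb {L : ℕ} {m : Fin L → ℝ} (hm : ∀ l, 0 ≤ m l) (hs : ∑ l, m l = 1) :
    IsProbabilityMeasure (wMeas m) := by
  constructor
  simp [wMeas, Measure.finsetSum_apply]
  rw [← ENNReal.ofReal_sum_of_nonneg fun l _ => hm l, hs, ENNReal.ofReal_one]

lemma integral_wMeas {L : ℕ} {m : Fin L → ℝ} (hm : ∀ l, 0 ≤ m l) (hs : ∑ l, m l = 1)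
    (f : Fin L → ℝ) : ∫ l, f l ∂wMeas m = ∑ l, m l * f l := by
  have := wMeas_isProb hm hs
  rw [integral_fintype (Integrable.of_finite)]
  refine Finset.sum_congr rfl fun l _ => ?_
  rw [Measure.real, wMeas_singleton, ENNReal.toReal_ofReal (hm l), smul_eq_mul]

lemma pi_wMeas_finset {L n : ℕ} {m : Fin L → ℝ} (hm : ∀ l, 0 ≤ m l) (hs : ∑ l, m l = 1)
    (A : Finset (Fin n → Fin L)) :
    Measure.pi (fun _ : Fin n => wMeas m) (A : Set (Fin n → Fin L)) =
      ∑ y ∈ A, ∏ j, ENNReal.ofReal (m (y j)) := by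
  have := wMeas_isProb hm hs
  rw [← sum_measure_singleton]
  simp_rw [Measure.pi_singleton, wMeas_singleton]

/-- Chebyshev's inequality for sums of i.i.d. bounded variables. -/
lemma chebyshev_pi {L n : ℕ} {m : Fin L → ℝ} (hm : ∀ l, 0 ≤ m l) (hs : ∑ l, m l = 1)
    (f : Fin L → ℝ) {M r : ℝ} (hf : ∀ l, |f l| ≤ M) (hr : 0 < r) :
    Measure.pi (fun _ : Fin n => wMeas m)
        {y | r ≤ |∑ j, f (y j) - n * ∑ l, m l * f l|} ≤ ENNReal.ofReal (n * M ^ 2 / r ^ 2) := by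
  have := wMeas_isProb hm hs
  have hL : ∀ g : Fin L → ℝ, MemLp g 2 (wMeas m) := fun g => MemLp.of_discrete
  have hfm : Measurable f := measurable_of_finite f
  have hmem : MemLp (∑ j : Fin n, fun y : Fin n → Fin L => f (y j)) 2
      (Measure.pi fun _ : Fin n => wMeas m) := MemLp.of_discrete
  have hvar : Var[∑ j : Fin n, fun y : Fin n → Fin L => f (y j);
      Measure.pi fun _ : Fin n => wMeas m] ≤ n * M ^ 2 := by
    rw [variance_sum_pi fun _ => hL f]
    have hv : Var[f; wMeas m] ≤ M ^ 2 := by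
      have := variance_le_sq_of_bounded (μ := wMeas m) (a := -M) (b := M)
        (ae_of_all _ fun l => abs_le.1 (hf l)) hfm.aemeasurable
      convert this using 1; ring
    simp only [Finset.sum_const, Finset.card_univ, Fintype.card_fin, nsmul_eq_mul]
    gcongr
  have hmean : ∫ y, (∑ j : Fin n, fun y : Fin n → Fin L => f (y j)) y
      ∂(Measure.pi fun _ : Fin n => wMeas m) = n * ∑ l, m l * f l := by
    simp only [Finset.sum_apply]
    rw [integral_finsetSum _ fun _ _ => Integrable.of_finite]
    simp_rw [integral_comp_eval (μ := fun _ : Fin n => wMeas m) hfm.aestronglyMeasurable,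
      integral_wMeas hm hs]
    simp
  have h := meas_ge_le_variance_div_sq hmem hr
  rw [hmean] at h
  simp only [Finset.sum_apply] at h
  refine h.trans (ENNReal.ofReal_le_ofReal ?_)
  gcongr

/-! ### Concentration of score and information -/

/-- Under the local parameter `t`, the statistic linear in `t` in the expanded log-likelihood has a
mean bounded uniformly in `s = √n`: the term of order `s` vanishes because `∑ b = 0`. -/
lemma score_mean_bound {L : ℕ} {q a b : Fin L → ℝ} (hq : ∀ l, 0 < q l) (hb : ∑ l, b l = 0)
    {s t T₀ : ℝ} (hs : 1 ≤ s) (ht : |t| ≤ T₀) :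
    |s ^ 2 * ∑ l, (q l + (a l + t * b l) / s) *
        (b l / q l / s - a l / q l * (b l / q l) / s ^ 2)| ≤
      T₀ * ∑ l, b l ^ 2 / q l + ∑ l, (|a l| + T₀ * |b l|) * (|a l / q l| * |b l / q l|) := by
  have hs0 : 0 < s := by linarith
  have hT₀ : 0 ≤ T₀ := (abs_nonneg t).trans ht
  have key : s ^ 2 * ∑ l, (q l + (a l + t * b l) / s) *
        (b l / q l / s - a l / q l * (b l / q l) / s ^ 2) =
      t * ∑ l, b l ^ 2 / q l
        - s⁻¹ * ∑ l, (a l + t * b l) * (a l / q l * (b l / q l)) := by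
    have h0 : s ^ 2 * ∑ l, (q l + (a l + t * b l) / s) *
        (b l / q l / s - a l / q l * (b l / q l) / s ^ 2) =
      s * ∑ l, b l + t * ∑ l, b l ^ 2 / q l
        - s⁻¹ * ∑ l, (a l + t * b l) * (a l / q l * (b l / q l)) := by
      simp only [Finset.mul_sum, ← Finset.sum_add_distrib, ← Finset.sum_sub_distrib]
      refine Finset.sum_congr rfl fun l _ => ?_
      have := (hq l).ne'
      field_simp
      ring
    rw [h0, hb]; ring
  have hJ : 0 ≤ ∑ l, b l ^ 2 / q l :=
    Finset.sum_nonneg fun l _ => div_nonneg (sq_nonneg _) (hq l).le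
  rw [key]
  refine (abs_sub _ _).trans (add_le_add ?_ ?_)
  · rw [abs_mul, abs_of_nonneg hJ]; gcongr
  · rw [abs_mul, abs_of_pos (inv_pos.2 hs0)]
    refine (mul_le_of_le_one_left (abs_nonneg _) (inv_le_one_of_one_le₀ hs)).trans ?_
    refine (Finset.abs_sum_le_sum_abs _ _).trans (Finset.sum_le_sum fun l _ => ?_)
    rw [abs_mul, abs_mul]
    gcongr
    refine (abs_add_le _ _).trans ?_
    rw [abs_mul]; gcongr

/-- Under the local parameter `t`, the mean of the empirical information per sample is the Fisher
information `∑ b² / q` up to `O(1 / √n)`. -/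
lemma info_mean_bound {L : ℕ} {q a b : Fin L → ℝ} (hq : ∀ l, 0 < q l)
    {s t T₀ : ℝ} (hs : 0 < s) (ht : |t| ≤ T₀) :
    ∑ l, (q l + (a l + t * b l) / s) * (b l / q l) ^ 2 ≤
      ∑ l, b l ^ 2 / q l + s⁻¹ * ∑ l, (|a l| + T₀ * |b l|) * (b l / q l) ^ 2 := by
  rw [Finset.mul_sum, ← Finset.sum_add_distrib]
  refine Finset.sum_le_sum fun l _ => ?_
  have h1 : a l + t * b l ≤ |a l| + T₀ * |b l| := by
    have := le_abs_self (t * b l)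
    rw [abs_mul] at this
    have h2 := mul_le_mul_of_nonneg_right ht (abs_nonneg (b l))
    linarith [le_abs_self (a l)]
  have h3 : (q l + (a l + t * b l) / s) * (b l / q l) ^ 2 =
      b l ^ 2 / q l + s⁻¹ * ((a l + t * b l) * (b l / q l) ^ 2) := by
    have := (hq l).ne'
    field_simp
  rw [h3]
  gcongr

/-- Under the local parameter `t`, with probability at least `1 - ζ` the linear statistic of the
log-likelihood is at most `R` in absolute value and the empirical information exceeds the Fisher
information by at most `ζ`. Chebyshev's inequality suffices, as the first only has to be tight and
the second only obeys a law of large numbers. -/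
lemma good_prob {L n : ℕ} {q a b : Fin L → ℝ} (hq : ∀ l, 0 < q l) (hqs : ∑ l, q l = 1)
    (ha : ∑ l, a l = 0) (hb : ∑ l, b l = 0) {s t T₀ B ζ R : ℝ} (hs : 1 ≤ s) (hsn : s ^ 2 = n)
    (ht : |t| ≤ T₀) (hB : 0 < B) (hζ : 0 < ζ) (hζ1 : ζ < 1)
    (hαB : ∀ l, |a l / q l| ≤ B) (hβB : ∀ l, |b l / q l| ≤ B)
    (hpos : ∀ l, 0 ≤ q l + (a l + t * b l) / s)
    (hR : T₀ * ∑ l, b l ^ 2 / q l + ∑ l, (|a l| + T₀ * |b l|) * (|a l / q l| * |b l / q l|) +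
      2 * (B + B ^ 2) / ζ ≤ R)
    (hs1 : 2 / ζ * ∑ l, (|a l| + T₀ * |b l|) * (b l / q l) ^ 2 ≤ s)
    (hs2 : 8 * B ^ 4 / ζ ^ 3 ≤ s) :
    ENNReal.ofReal (1 - ζ) ≤ ∑ y : Fin n → Fin L with
      |∑ j, (b (y j) / q (y j) / s - a (y j) / q (y j) * (b (y j) / q (y j)) / s ^ 2)| ≤ R ∧
      (∑ j, (b (y j) / q (y j)) ^ 2) / n ≤ ∑ l, b l ^ 2 / q l + ζ,
      ∏ j, ENNReal.ofReal (q (y j) + (a (y j) + t * b (y j)) / s) := by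
  classical
  have hs0 : 0 < s := by linarith
  have hn0 : (0:ℝ) < n := by rw [← hsn]; positivity
  set m : Fin L → ℝ := fun l => q l + (a l + t * b l) / s with hm
  have hms : ∑ l, m l = 1 := by
    simp only [hm, Finset.sum_add_distrib, ← Finset.sum_div, ← Finset.mul_sum, ha, hb, hqs]
    simp
  set fX : Fin L → ℝ := fun l => b l / q l / s - a l / q l * (b l / q l) / s ^ 2 with hfX
  set J : ℝ := ∑ l, b l ^ 2 / q l with hJ
  have hX := chebyshev_pi (n := n) hpos hms fX (M := (B + B ^ 2) / s) (r := 2 * (B + B ^ 2) / ζ)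
    (by
      intro l
      rw [hfX]
      have h1 : |b l / q l / s| ≤ B / s := by rw [abs_div, abs_of_pos hs0]; gcongr; exact hβB l
      have h2 : |a l / q l * (b l / q l) / s ^ 2| ≤ B ^ 2 / s := by
        rw [abs_div, abs_of_pos (by positivity : 0 < s ^ 2), abs_mul]
        calc |a l / q l| * |b l / q l| / s ^ 2 ≤ B * B / s ^ 2 := by
              gcongr
              · exact hαB l
              · exact hβB l
          _ ≤ B ^ 2 / s := by
              rw [← sq]; gcongr; nlinarith
      refine (abs_sub _ _).trans ?_
      rw [add_div]; exact add_le_add h1 h2) (by positivity)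
  have hV := chebyshev_pi (n := n) hpos hms (fun l => (b l / q l) ^ 2) (M := B ^ 2)
    (r := n * ζ / 2)
    (by
      intro l
      rw [abs_pow]
      exact pow_le_pow_left₀ (abs_nonneg _) (hβB l) 2) (by positivity)
  have hXr : (n:ℝ) * ((B + B ^ 2) / s) ^ 2 / (2 * (B + B ^ 2) / ζ) ^ 2 ≤ ζ / 2 := by
    have : (n:ℝ) * ((B + B ^ 2) / s) ^ 2 / (2 * (B + B ^ 2) / ζ) ^ 2 = ζ ^ 2 / 4 := by
      rw [← hsn]; field_simp; norm_num
    rw [this]; nlinarith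
  have hVr : (n:ℝ) * (B ^ 2) ^ 2 / (n * ζ / 2) ^ 2 ≤ ζ / 2 := by
    have h1 : (n:ℝ) * (B ^ 2) ^ 2 / (n * ζ / 2) ^ 2 = 4 * B ^ 4 / ζ ^ 2 / n := by
      field_simp; norm_num
    have h2 : 8 * B ^ 4 / ζ ^ 3 ≤ n := by rw [← hsn]; nlinarith
    rw [h1, div_le_iff₀ hn0]
    calc 4 * B ^ 4 / ζ ^ 2 = ζ / 2 * (8 * B ^ 4 / ζ ^ 3) := by field_simp; norm_num
      _ ≤ ζ / 2 * n := by gcongr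
  set G : Finset (Fin n → Fin L) := {y : Fin n → Fin L | |∑ j, fX (y j)| ≤ R ∧
      (∑ j, (b (y j) / q (y j)) ^ 2) / n ≤ J + ζ} with hG
  have hcover : (Set.univ : Set (Fin n → Fin L)) ⊆ (G : Set (Fin n → Fin L)) ∪
      ({y | 2 * (B + B ^ 2) / ζ ≤ |∑ j, fX (y j) - n * ∑ l, m l * fX l|} ∪
       {y | n * ζ / 2 ≤ |∑ j, (b (y j) / q (y j)) ^ 2 - n * ∑ l, m l * (b l / q l) ^ 2|}) := by
    intro y _
    by_contra hcon
    simp only [Set.mem_union, not_or, Set.mem_ofPred_eq, not_le] at hcon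
    obtain ⟨h1, h2, h3⟩ := hcon
    apply h1
    simp only [hG, Finset.coe_filter, Finset.mem_univ, true_and, Set.mem_ofPred_eq]
    constructor
    · have hmean := score_mean_bound (a := a) hq hb hs ht
      rw [hsn] at hmean
      have htri := abs_add_le (∑ j, fX (y j) - n * ∑ l, m l * fX l) (n * ∑ l, m l * fX l)
      rw [sub_add_cancel] at htri
      have : |(n:ℝ) * ∑ l, m l * fX l| ≤
        T₀ * J + ∑ l, (|a l| + T₀ * |b l|) * (|a l / q l| * |b l / q l|) := by
        simpa only [hm, hfX, hsn] using hmean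
      linarith
    · have hmean := info_mean_bound (a := a) (b := b) hq hs0 ht
      have h4 := (abs_lt.1 h3).2
      set N₂ := ∑ l, (|a l| + T₀ * |b l|) * (b l / q l) ^ 2 with hN₂
      have h5 : s⁻¹ * N₂ ≤ ζ / 2 := by
        rw [inv_mul_le_iff₀ hs0]
        calc N₂ = ζ / 2 * (2 / ζ * N₂) := by field_simp
          _ ≤ ζ / 2 * s := by gcongr
          _ = s * (ζ / 2) := mul_comm _ _
      have h6 : (n:ℝ) * ∑ l, m l * (b l / q l) ^ 2 ≤ n * (J + ζ / 2) := by
        gcongr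
        linarith
      rw [div_le_iff₀ hn0]
      nlinarith
  have : IsProbabilityMeasure (wMeas m) := wMeas_isProb hpos hms
  have h1 : (1 : ℝ≥0∞) ≤ Measure.pi (fun _ : Fin n => wMeas m) (G : Set (Fin n → Fin L)) +
      (ENNReal.ofReal (ζ / 2) + ENNReal.ofReal (ζ / 2)) := by
    calc (1 : ℝ≥0∞) = Measure.pi (fun _ : Fin n => wMeas m) Set.univ := measure_univ.symm
      _ ≤ _ := measure_mono hcover
      _ ≤ _ := measure_union_le _ _
      _ ≤ _ := by
        gcongr
        refine (measure_union_le _ _).trans (add_le_add ?_ ?_)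
        · exact hX.trans (ENNReal.ofReal_le_ofReal hXr)
        · exact hV.trans (ENNReal.ofReal_le_ofReal hVr)
  rw [← ENNReal.ofReal_add (by positivity) (by positivity), add_halves,
    pi_wMeas_finset hpos hms] at h1
  rw [ENNReal.ofReal_sub _ hζ.le, ENNReal.ofReal_one]
  exact tsub_le_iff_right.2 h1

/-! ### The Bayes bound in a one-dimensional local family -/

/-- Up to factors `e^{±δ}`, the likelihood of `y` times the Gaussian prior density of precision `η`
is, on `|t| ≤ T`, a multiple of the Gaussian density in `t` of precision `κ` and mean `X / κ`,
where `X` is the coefficient of `t` in the expanded log-likelihood and `κ` is `η` plus the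
empirical information. -/
lemma likelihood_sandwich {L n : ℕ} {q a b : Fin L → ℝ} (hq : ∀ l, 0 < q l)
    {s η T B : ℝ} {v : ℝ≥0} (hs : 0 < s) (hsn : s ^ 2 = n) (hη : 0 < η) (hv : (v : ℝ) = η⁻¹)
    (hαB : ∀ l, |a l / q l| ≤ B) (hβB : ∀ l, |b l / q l| ≤ B)
    (hr : B * (1 + T) / s ≤ 1 / 2) (y : Fin n → Fin L) :
    ∃ K : ℝ≥0∞, ∀ t, |t| ≤ T →
      let X := ∑ j, (b (y j) / q (y j) / s - a (y j) / q (y j) * (b (y j) / q (y j)) / s ^ 2)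
      let κ := η + (∑ j, (b (y j) / q (y j)) ^ 2) / n
      let δ := 2 * n * (B * (1 + T) / s) ^ 3
      let F := gaussianPDF 0 v t * ∏ j, ENNReal.ofReal (q (y j) + (a (y j) + t * b (y j)) / s)
      ENNReal.ofReal (exp (-δ)) * K * ENNReal.ofReal (exp (-κ * (t - X / κ) ^ 2 / 2)) ≤ F ∧
      F ≤ ENNReal.ofReal (exp δ) * K * ENNReal.ofReal (exp (-κ * (t - X / κ) ^ 2 / 2)) := by
  set A₀ : ℝ := ∑ j, (a (y j) / q (y j) / s - (a (y j) / q (y j)) ^ 2 / s ^ 2 / 2) with hA₀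
  set X := ∑ j, (b (y j) / q (y j) / s - a (y j) / q (y j) * (b (y j) / q (y j)) / s ^ 2) with hX
  set V := (∑ j, (b (y j) / q (y j)) ^ 2) / n with hV
  have hV0 : 0 ≤ V := by positivity
  set κ := η + V with hκ
  have hκ0 : 0 < κ := by positivity
  have hv0 : 0 < √(2 * π * v) := by rw [hv]; positivity
  have hprodq : 0 < ∏ j, q (y j) := Finset.prod_pos fun j _ => hq _
  refine ⟨ENNReal.ofReal ((√(2 * π * v))⁻¹ * (∏ j, q (y j)) * exp (A₀ + X ^ 2 / (2 * κ))), ?_⟩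
  intro t ht X' κ' δ F
  have hz : ∀ j, |(a (y j) / q (y j) + t * (b (y j) / q (y j))) / s| ≤ B * (1 + T) / s := by
    intro j
    rw [abs_div, abs_of_pos hs]
    gcongr
    refine (abs_add_le _ _).trans ?_
    rw [abs_mul]
    have := mul_le_mul ht (hβB (y j)) (abs_nonneg _) ((abs_nonneg t).trans ht)
    linarith [hαB (y j)]
  obtain ⟨h1, h2⟩ := prod_one_add_bounds _ hz hr
  have hquad : ∑ j, ((a (y j) / q (y j) + t * (b (y j) / q (y j))) / s -
      ((a (y j) / q (y j) + t * (b (y j) / q (y j))) / s) ^ 2 / 2) =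
      A₀ + t * X - t ^ 2 * V / 2 := by
    rw [hA₀, hX, hV, ← hsn, Finset.mul_sum, ← Finset.sum_add_distrib, Finset.sum_div,
      Finset.mul_sum, Finset.sum_div, ← Finset.sum_sub_distrib]
    refine Finset.sum_congr rfl fun j _ => ?_
    field_simp
    ring
  have hfac : ∀ j, q (y j) + (a (y j) + t * b (y j)) / s =
      q (y j) * (1 + (a (y j) / q (y j) + t * (b (y j) / q (y j))) / s) := by
    intro j
    have := (hq (y j)).ne'
    field_simp
  have hnn : ∀ j, 0 ≤ q (y j) + (a (y j) + t * b (y j)) / s := by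
    intro j
    rw [hfac]
    have := (abs_le.1 (hz j)).1
    exact mul_nonneg (hq _).le (by linarith)
  have hF : F = ENNReal.ofReal ((√(2 * π * v))⁻¹ * exp (-η * t ^ 2 / 2) *
      ((∏ j, q (y j)) * ∏ j, (1 + (a (y j) / q (y j) + t * (b (y j) / q (y j))) / s))) := by
    have hpdf : gaussianPDFReal 0 v t = (√(2 * π * v))⁻¹ * exp (-η * t ^ 2 / 2) := by
      rw [gaussianPDFReal, hv]
      congr 2
      field_simp
      ring
    simp only [F]
    rw [gaussianPDF, hpdf, ← ENNReal.ofReal_prod_of_nonneg fun j _ => hnn j,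
      ← ENNReal.ofReal_mul (by positivity), ← Finset.prod_mul_distrib]
    simp_rw [hfac]
  have hsq : exp (A₀ + X ^ 2 / (2 * κ)) * exp (-κ * (t - X / κ) ^ 2 / 2) =
      exp (-η * t ^ 2 / 2) * exp (A₀ + t * X - t ^ 2 * V / 2) := by
    rw [← exp_add, ← exp_add]
    congr 1
    have : V = κ - η := by rw [hκ]; ring
    rw [this]
    field_simp
    ring
  rw [hquad] at h1 h2
  have hX' : X' = X := rfl
  have hκ' : κ' = κ := rfl
  rw [hF, hX', hκ', ← ENNReal.ofReal_mul (by positivity), ← ENNReal.ofReal_mul (by positivity),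
    ← ENNReal.ofReal_mul (by positivity), ← ENNReal.ofReal_mul (by positivity)]
  have hc : 0 ≤ (√(2 * π * v))⁻¹ * exp (-η * t ^ 2 / 2) * ∏ j, q (y j) := by positivity
  constructor
  · apply ENNReal.ofReal_le_ofReal
    calc exp (-δ) * ((√(2 * π * v))⁻¹ * (∏ j, q (y j)) * exp (A₀ + X ^ 2 / (2 * κ))) *
          exp (-κ * (t - X / κ) ^ 2 / 2)
        = exp (-δ) * ((√(2 * π * v))⁻¹ * (∏ j, q (y j))) *
          (exp (A₀ + X ^ 2 / (2 * κ)) * exp (-κ * (t - X / κ) ^ 2 / 2)) := by ring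
      _ = (√(2 * π * v))⁻¹ * exp (-η * t ^ 2 / 2) * (∏ j, q (y j)) *
          (exp (-δ) * exp (A₀ + t * X - t ^ 2 * V / 2)) := by rw [hsq]; ring
      _ ≤ _ := mul_le_mul_of_nonneg_left h1 hc
      _ = _ := by ring
  · apply ENNReal.ofReal_le_ofReal
    calc _ = (√(2 * π * v))⁻¹ * exp (-η * t ^ 2 / 2) * (∏ j, q (y j)) *
          ∏ j, (1 + (a (y j) / q (y j) + t * (b (y j) / q (y j))) / s) := by ring
      _ ≤ _ := mul_le_mul_of_nonneg_left h2 hc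
      _ = exp δ * ((√(2 * π * v))⁻¹ * (∏ j, q (y j))) *
          (exp (A₀ + X ^ 2 / (2 * κ)) * exp (-κ * (t - X / κ) ^ 2 / 2)) := by rw [hsq]; ring
      _ = _ := by ring

lemma exists_gaussian_mass (v : ℝ≥0) {ζ : ℝ} (hζ : 0 < ζ) :
    ∃ T₀ : ℝ, 0 ≤ T₀ ∧ ENNReal.ofReal (1 - ζ) ≤ gaussianReal 0 v {t : ℝ | |t| ≤ T₀} := by
  have hU : (⋃ N : ℕ, {x : ℝ | |x| ≤ (N : ℝ)}) = Set.univ := by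
    ext x; simpa using exists_nat_ge |x|
  have hm : Monotone fun N : ℕ => {x : ℝ | |x| ≤ (N : ℝ)} := by
    intro a b hab x hx
    exact le_trans (Set.mem_ofPred.mp hx) (by exact_mod_cast hab)
  have h2 := tendsto_measure_iUnion_atTop (μ := gaussianReal 0 v) hm
  rw [hU, measure_univ] at h2
  have hlt : ENNReal.ofReal (1 - ζ) < 1 := by
    rw [← ENNReal.ofReal_one, ENNReal.ofReal_lt_ofReal_iff one_pos]; linarith
  obtain ⟨N, hN⟩ := (h2.eventually (lt_mem_nhds hlt)).exists
  exact ⟨N, by positivity, hN.le⟩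

set_option maxHeartbeats 1000000 in
/-- Local asymptotic Bayes bound in the one-dimensional family `q + (a + t b) / √n` with offset `a`,
direction `b` and prior `N(0, η⁻¹)` on `t`: estimating `c t` costs asymptotically at least
`C_u c^u (J + η)^{-u/2}`, where `J = ∑ b² / q`. The bound is uniform in the estimator `e`. -/
lemma bayes_slice {L : ℕ} {q a b : Fin L → ℝ} (hq : ∀ l, 0 < q l) (hqs : ∑ l, q l = 1)
    (ha : ∑ l, a l = 0) (hb : ∑ l, b l = 0) {u c η ζ : ℝ} (hu : 1 ≤ u) (hc : 0 ≤ c)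
    (hη : 0 < η) (hζ : 0 < ζ) (hζ1 : ζ < 1) {v : ℝ≥0} (hv : (v : ℝ) = η⁻¹) :
    ∃ T : ℝ, ∀ᶠ n : ℕ in atTop, ∀ e : (Fin n → Fin L) → ℝ,
      ENNReal.ofReal ((1 - ζ) ^ 4 * Cmom u *
          (c ^ u * (∑ l, b l ^ 2 / q l + η + ζ) ^ (-(u / 2)))) ≤
        ∫⁻ t in {t : ℝ | |t| ≤ T}, ∑ y : Fin n → Fin L,
          (∏ j, ENNReal.ofReal (q (y j) + (a (y j) + t * b (y j)) / √n)) *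
            ENNReal.ofReal (|e y - c * t| ^ u) ∂gaussianReal 0 v := by
  classical
  have hv0 : v ≠ 0 := by
    intro h; rw [h] at hv; exact (inv_pos.2 hη).ne (by simpa using hv)
  obtain ⟨S, hS0, hS⟩ := exists_gaussTrunc (u := u) (by linarith) hζ
  obtain ⟨T₀, hT₀, hmass⟩ := exists_gaussian_mass v hζ
  set J : ℝ := ∑ l, b l ^ 2 / q l with hJ
  have hJ0 : 0 ≤ J := Finset.sum_nonneg fun l _ => div_nonneg (sq_nonneg _) (hq l).le
  -- A common bound for the relative perturbations, kept positive by the summand `1`.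
  set B : ℝ := 1 + ∑ l, (|a l / q l| + |b l / q l|) with hBdef
  have hB : 0 < B := by positivity
  have hle : ∀ l, |a l / q l| + |b l / q l| ≤ B := by
    intro l
    have := Finset.single_le_sum (f := fun l => |a l / q l| + |b l / q l|)
      (fun l _ => by positivity) (Finset.mem_univ l)
    linarith
  have hαB : ∀ l, |a l / q l| ≤ B := fun l => by linarith [hle l, abs_nonneg (b l / q l)]
  have hβB : ∀ l, |b l / q l| ≤ B := fun l => by linarith [hle l, abs_nonneg (a l / q l)]
  clear_value B J
  set N₁ : ℝ := T₀ * J + ∑ l, (|a l| + T₀ * |b l|) * (|a l / q l| * |b l / q l|) +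
      2 * (B + B ^ 2) / ζ with hN₁
  have hN₁0 : 0 ≤ N₁ := by positivity
  -- The three terms of `T` ensure, in turn, that the prior has mass at least `1 - ζ` on the window,
  -- that the posterior mean satisfies `|X / κ| ≤ T / 2`, and that the truncation level `√η T / 2`
  -- of the moment is at least `S`.
  set T : ℝ := T₀ + 2 * N₁ / η + 2 * S / √η with hT
  have hsη : 0 < √η := by positivity
  have hTT₀ : T₀ ≤ T := by
    have h1 : 0 ≤ 2 * N₁ / η := by positivity
    have h2 : 0 ≤ 2 * S / √η := by positivity
    linarith
  have hT0 : 0 ≤ T := hT₀.trans hTT₀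
  have hTN : N₁ ≤ η * T / 2 := by
    have h2 : 0 ≤ 2 * S / √η := by positivity
    have h3 : η * (2 * N₁ / η) = 2 * N₁ := by field_simp
    nlinarith
  have hTS : S ≤ √η * (T / 2) := by
    have h1 : 0 ≤ 2 * N₁ / η := by positivity
    have h3 : √η * (2 * S / √η) = 2 * S := by field_simp
    nlinarith
  rw [hN₁] at hTN
  clear_value T
  clear hT hN₁ hN₁0 N₁
  refine ⟨T, ?_⟩
  have hlarge : ∀ᶠ n : ℕ in atTop, 1 + 2 / ζ * ∑ l, (|a l| + T₀ * |b l|) * (b l / q l) ^ 2 +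
      8 * B ^ 4 / ζ ^ 3 + 2 * (B * (1 + T)) + 4 * (B * (1 + T)) ^ 3 / ζ ≤ √(n : ℝ) :=
    (Real.tendsto_sqrt_atTop.comp tendsto_natCast_atTop_atTop).eventually_ge_atTop _
  filter_upwards [hlarge] with n hn e
  set s : ℝ := √(n : ℝ) with hs
  have hsn : s ^ 2 = n := Real.sq_sqrt (by positivity)
  clear_value s
  have e1 : 0 ≤ 2 / ζ * ∑ l, (|a l| + T₀ * |b l|) * (b l / q l) ^ 2 := by positivity
  have e2 : 0 ≤ 8 * B ^ 4 / ζ ^ 3 := by positivity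
  have e3 : 0 ≤ 2 * (B * (1 + T)) := by positivity
  have e4 : 0 ≤ 4 * (B * (1 + T)) ^ 3 / ζ := by positivity
  have hs1 : 1 ≤ s := by linarith
  have hs0 : 0 < s := by linarith
  have hr : B * (1 + T) / s ≤ 1 / 2 := by rw [div_le_iff₀ hs0]; linarith
  have hδ : 2 * n * (B * (1 + T) / s) ^ 3 ≤ ζ / 2 := by
    have h1 : 2 * n * (B * (1 + T) / s) ^ 3 = 2 * (B * (1 + T)) ^ 3 / s := by
      rw [← hsn]; field_simp
    rw [h1, div_le_iff₀ hs0]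
    calc 2 * (B * (1 + T)) ^ 3 = ζ / 2 * (4 * (B * (1 + T)) ^ 3 / ζ) := by field_simp; norm_num
      _ ≤ ζ / 2 * s := by gcongr; linarith
  set δ : ℝ := 2 * n * (B * (1 + T) / s) ^ 3 with hδdef
  clear_value δ
  set lik : ℝ → (Fin n → Fin L) → ℝ≥0∞ := fun t y =>
    ∏ j, ENNReal.ofReal (q (y j) + (a (y j) + t * b (y j)) / s) with hlik
  have hlikm : ∀ y, Measurable fun t => lik t y := fun y => by
    simp only [hlik]; fun_prop
  have hlm : ∀ y, Measurable fun t => lik t y * ENNReal.ofReal (|e y - c * t| ^ u) := fun y => by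
    have := hlikm y
    fun_prop
  have hms : ∀ S : ℝ, MeasurableSet {s : ℝ | |s| ≤ S} :=
    fun S => measurableSet_le (by fun_prop) (by fun_prop)
  set κ₁ : ℝ := J + η + ζ with hκ₁
  have hκ₁0 : 0 < κ₁ := by positivity
  clear_value κ₁
  set G : Finset (Fin n → Fin L) := {y : Fin n → Fin L |
    |∑ j, (b (y j) / q (y j) / s - a (y j) / q (y j) * (b (y j) / q (y j)) / s ^ 2)| ≤ η * T / 2 ∧
      (∑ j, (b (y j) / q (y j)) ^ 2) / n ≤ J + ζ} with hG
  set C : ℝ≥0∞ := ENNReal.ofReal (exp (-(2 * δ)) * c ^ u * κ₁ ^ (-(u / 2))) *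
    gaussTrunc u (√η * (T / 2)) with hC
  have hdens : ∀ g : ℝ → ℝ≥0∞, Measurable g → ∀ S : ℝ,
      ∫⁻ t in {t : ℝ | |t| ≤ S}, g t ∂gaussianReal 0 v =
        ∫⁻ t in {t : ℝ | |t| ≤ S}, gaussianPDF 0 v t * g t := by
    intro g hg S
    rw [gaussianReal_of_var_ne_zero 0 hv0,
      setLIntegral_withDensity_eq_setLIntegral_mul _ (measurable_gaussianPDF 0 v) hg (hms S)]
    rfl
  have hslice : ∀ y ∈ G, C * ∫⁻ t in {t : ℝ | |t| ≤ T}, lik t y ∂gaussianReal 0 v ≤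
      ∫⁻ t in {t : ℝ | |t| ≤ T}, lik t y * ENNReal.ofReal (|e y - c * t| ^ u)
        ∂gaussianReal 0 v := by
    intro y hy
    simp only [hG, Finset.mem_filter, Finset.mem_univ, true_and] at hy
    obtain ⟨hyX, hyV⟩ := hy
    obtain ⟨K, hK⟩ := likelihood_sandwich (T := T) hq hs0 hsn hη hv hαB hβB hr y
    have hVnn : 0 ≤ (∑ j, (b (y j) / q (y j)) ^ 2) / (n : ℝ) := by positivity
    have hκpos : 0 < η + (∑ j, (b (y j) / q (y j)) ^ 2) / (n : ℝ) := by linarith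
    have hμ : |(∑ j, (b (y j) / q (y j) / s -
        a (y j) / q (y j) * (b (y j) / q (y j)) / s ^ 2)) /
        (η + (∑ j, (b (y j) / q (y j)) ^ 2) / (n : ℝ))| ≤ T / 2 := by
      rw [abs_div, abs_of_pos hκpos, div_le_iff₀ hκpos]
      refine hyX.trans ?_
      nlinarith
    rw [hdens _ (hlikm y), hdens _ (hlm y)]
    have := bayes_sandwich (e := e y) hu hc hη (by linarith) (by linarith) hT0 hμ
      (fun t ht => (hK t ht).1) (fun t ht => (hK t ht).2) (κ₁ := κ₁)
    simpa only [mul_assoc, hC, hlik, hδdef] using this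
  have hTN' := hTN
  rw [hJ] at hTN'
  have hgood : ∀ t, |t| ≤ T₀ → ENNReal.ofReal (1 - ζ) ≤ ∑ y ∈ G, lik t y := by
    intro t ht
    have g1 : 2 / ζ * ∑ l, (|a l| + T₀ * |b l|) * (b l / q l) ^ 2 ≤ s := by linarith
    have g2 : 8 * B ^ 4 / ζ ^ 3 ≤ s := by linarith
    have hgp := good_prob (s := s) (t := t) hq hqs ha hb hs1 hsn ht hB hζ hζ1 hαB hβB ?_ hTN' g1 g2
    · rw [← hJ] at hgp
      exact hgp
    intro l
    have h1 : q l + (a l + t * b l) / s = q l * (1 + (a l / q l + t * (b l / q l)) / s) := by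
      have := (hq l).ne'
      field_simp
    rw [h1]
    have h2 : |(a l / q l + t * (b l / q l)) / s| ≤ B * (1 + T) / s := by
      rw [abs_div, abs_of_pos hs0]
      gcongr
      refine (abs_add_le _ _).trans ?_
      rw [abs_mul]
      have := mul_le_mul (ht.trans hTT₀) (hβB l) (abs_nonneg _) hT0
      linarith [hαB l]
    have := (abs_le.1 h2).1
    exact mul_nonneg (hq l).le (by linarith)
  have hCle : ENNReal.ofReal ((1 - ζ) * Cmom u * ((1 - ζ) *
      (c ^ u * κ₁ ^ (-(u / 2))))) ≤ C := by
    rw [hC, mul_comm, ENNReal.ofReal_mul (by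
      have : 0 ≤ 1 - ζ := by linarith
      positivity)]
    refine mul_le_mul' (ENNReal.ofReal_le_ofReal ?_) (hS.trans (gaussTrunc_mono hTS))
    rw [mul_assoc]
    gcongr
    have := Real.add_one_le_exp (-(2 * δ))
    linarith
  have hz : 0 ≤ 1 - ζ := by linarith
  have hfin : ∫⁻ t in {t : ℝ | |t| ≤ T}, ∑ y : Fin n → Fin L,
        (∏ j, ENNReal.ofReal (q (y j) + (a (y j) + t * b (y j)) / s)) *
          ENNReal.ofReal (|e y - c * t| ^ u) ∂gaussianReal 0 v =
      ∑ y, ∫⁻ t in {t : ℝ | |t| ≤ T}, lik t y * ENNReal.ofReal (|e y - c * t| ^ u)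
          ∂gaussianReal 0 v := lintegral_finsetSum _ fun y _ => hlm y
  rw [hfin]
  have hCm := Cmom_nonneg u
  clear_value C lik G
  calc ENNReal.ofReal ((1 - ζ) ^ 4 * Cmom u * (c ^ u * κ₁ ^ (-(u / 2))))
      = ENNReal.ofReal ((1 - ζ) * Cmom u * ((1 - ζ) * (c ^ u * κ₁ ^ (-(u / 2))))) *
          (ENNReal.ofReal (1 - ζ) * ENNReal.ofReal (1 - ζ)) := by
        rw [← ENNReal.ofReal_mul hz, ← ENNReal.ofReal_mul (by positivity)]
        congr 1; ring
    _ ≤ C * (ENNReal.ofReal (1 - ζ) * gaussianReal 0 v {t : ℝ | |t| ≤ T₀}) := by gcongr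
    _ = C * ∫⁻ _ in {t : ℝ | |t| ≤ T₀}, ENNReal.ofReal (1 - ζ) ∂gaussianReal 0 v := by
        rw [setLIntegral_const]
    _ ≤ C * ∫⁻ t in {t : ℝ | |t| ≤ T₀}, ∑ y ∈ G, lik t y ∂gaussianReal 0 v := by
        gcongr C * ?_
        exact setLIntegral_mono' (hms _) fun t ht => hgood t ht
    _ ≤ C * ∫⁻ t in {t : ℝ | |t| ≤ T}, ∑ y ∈ G, lik t y ∂gaussianReal 0 v := by
        gcongr C * ?_
        exact lintegral_mono_set fun t ht => le_trans (Set.mem_ofPred.mp ht) hTT₀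
    _ = ∑ y ∈ G, C * ∫⁻ t in {t : ℝ | |t| ≤ T}, lik t y ∂gaussianReal 0 v := by
        rw [lintegral_finsetSum _ fun y _ => hlikm y, Finset.mul_sum]
    _ ≤ ∑ y ∈ G, ∫⁻ t in {t : ℝ | |t| ≤ T}, lik t y * ENNReal.ofReal (|e y - c * t| ^ u)
          ∂gaussianReal 0 v := Finset.sum_le_sum hslice
    _ ≤ ∑ y, ∫⁻ t in {t : ℝ | |t| ≤ T}, lik t y * ENNReal.ofReal (|e y - c * t| ^ u)
          ∂gaussianReal 0 v := Finset.sum_le_sum_of_subset (Finset.subset_univ _)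

/-! ### Gaussian perturbations of the uniform law -/

/-- The point `1/k + (w - m)/√n` of the hyperplane of total mass one, with `m` the mean of the
entries of `w`. It is a rescaled neighbourhood of the uniform law, parametrised redundantly by all
of `ℝ^k` so that the prior on `w` can be a product measure. -/
noncomputable def pert (k n : ℕ) (w : Fin k → ℝ) (i : Fin k) : ℝ :=
  1 / (k : ℝ) + (w i - (∑ v, w v) / k) / √(n : ℝ)

/-- The event that `pert k n w` is a probability vector. -/
noncomputable def okSet (k n : ℕ) : Set (Fin k → ℝ) := {w | ∀ i, 0 ≤ pert k n w i}

/-- The channel matrix with its row means subtracted: the direction in which the output law at the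
uniform input moves when the coordinate `w v` changes. -/
noncomputable def dev {k L : ℕ} (q : Fin L → Fin k → ℝ) (l : Fin L) (v : Fin k) : ℝ :=
  q l v - qrow q l

/-- The risk in coordinate `i` at the parameter `pert k n w`, with the error rescaled by `√n`: the sum
over all observations of likelihood times loss. It is the actual risk only for `w ∈ okSet k n`;
elsewhere negative factors of the likelihood are read as `0`. -/
noncomputable def compRisk {k L n : ℕ} (q : Fin L → Fin k → ℝ) (u : ℝ)
    (est : (Fin n → Fin L) → Fin k → ℝ) (i : Fin k) (w : Fin k → ℝ) : ℝ≥0∞ :=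
  ∑ y : Fin n → Fin L,
    (∏ j, ENNReal.ofReal (qrow q (y j) + (∑ v, w v * dev q (y j) v) / √(n : ℝ))) *
      ENNReal.ofReal (|√(n : ℝ) * (est y i - pert k n w i)| ^ u)

lemma pert_mem_simplex {k n : ℕ} (hk : 0 < k) {w : Fin k → ℝ} (hw : w ∈ okSet k n) :
    pert k n w ∈ simplex k := by
  refine ⟨hw, ?_⟩
  have hk' : (k : ℝ) ≠ 0 := by positivity
  simp only [pert, Finset.sum_add_distrib, ← Finset.sum_div, Finset.sum_sub_distrib,
    Finset.sum_const, Finset.card_univ, Fintype.card_fin, nsmul_eq_mul]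
  field_simp
  ring

lemma pert_marginal {k L n : ℕ} (q : Fin L → Fin k → ℝ) (w : Fin k → ℝ) (l : Fin L) :
    ∑ v, pert k n w v * q l v = qrow q l + (∑ v, w v * dev q l v) / √(n : ℝ) := by
  have h1 : ∑ v, w v * dev q l v = ∑ v, w v * q l v - (∑ v, w v) * qrow q l := by
    simp only [dev, mul_sub, Finset.sum_sub_distrib, Finset.sum_mul]
  have h2 : ∑ v, pert k n w v * q l v =
      (1 / (k : ℝ)) * ∑ v, q l v + (∑ v, w v * q l v - (∑ v, w v) * ((1 / (k : ℝ)) *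
        ∑ v, q l v)) / √(n : ℝ) := by
    rw [Finset.mul_sum, Finset.mul_sum, ← Finset.sum_sub_distrib, Finset.sum_div,
      ← Finset.sum_add_distrib]
    refine Finset.sum_congr rfl fun v _ => ?_
    rw [pert]; ring
  rw [h1, h2, qrow]

lemma matKernel_apply {k L : ℕ} (q : Fin L → Fin k → ℝ) (v : Fin k) :
    matKernel k L q v = wMeas fun l => q l v := rfl

lemma marginal_matKernel {k L : ℕ} {q : Fin L → Fin k → ℝ} (hq : ∀ l v, 0 ≤ q l v)
    {p : Fin k → ℝ} (hp : p ∈ simplex k) :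
    marginal (matKernel k L q) p = wMeas fun l => ∑ v, p v * q l v := by
  refine Measure.ext_of_singleton fun l => ?_
  rw [wMeas_singleton, marginal, Measure.finsetSum_apply]
  simp only [Measure.smul_apply, matKernel_apply, wMeas_singleton, smul_eq_mul]
  rw [ENNReal.ofReal_sum_of_nonneg fun v _ => mul_nonneg (hp.1 v) (hq l v)]
  exact Finset.sum_congr rfl fun v _ => (ENNReal.ofReal_mul (hp.1 v)).symm

lemma le_risk {k L n : ℕ} {q : Fin L → Fin k → ℝ} (hq : ∀ l v, 0 ≤ q l v)
    (hqs : ∀ v, ∑ l, q l v = 1) {u : ℝ} (est : (Fin n → Fin L) → Fin k → ℝ)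
    {p : Fin k → ℝ} (hp : p ∈ simplex k) :
    ∑ y : Fin n → Fin L, (∏ j, ENNReal.ofReal (∑ v, p v * q (y j) v)) *
      ENNReal.ofReal (∑ i, |est y i - p i| ^ u) ≤ risk k n u (matKernel k L q) est := by
  refine le_trans (le_of_eq ?_) (le_iSup₂_of_le p hp le_rfl)
  have hm : ∀ l, 0 ≤ ∑ v, p v * q l v := fun l =>
    Finset.sum_nonneg fun v _ => mul_nonneg (hp.1 v) (hq l v)
  have hs : ∑ l, ∑ v, p v * q l v = 1 := by
    rw [Finset.sum_comm]
    simp only [← Finset.mul_sum, hqs, mul_one, hp.2]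
  have := wMeas_isProb hm hs
  rw [marginal_matKernel hq hp, lintegral_fintype]
  refine Finset.sum_congr rfl fun y _ => ?_
  rw [Measure.pi_singleton, mul_comm]
  simp only [wMeas_singleton]

lemma measurable_resample {k : ℕ} (μ : Measure ℝ) [IsProbabilityMeasure μ] (i : Fin k)
    {f : (Fin k → ℝ) → ℝ≥0∞} (hf : Measurable f) :
    Measurable fun x : Fin k → ℝ => ∫⁻ t, f (Function.update x i t) ∂μ := by
  have : Measurable fun z : (Fin k → ℝ) × ℝ => f (Function.update z.1 i z.2) := by
    refine hf.comp (measurable_pi_lambda _ fun j => ?_)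
    by_cases h : j = i
    · subst h; simpa using measurable_snd
    · simpa [Function.update_of_ne h, Function.comp_def] using
        (measurable_pi_apply j).comp measurable_fst
  exact this.lintegral_prod_right'

/-- Redrawing one coordinate of a product measure does not change its law. -/
lemma lintegral_resample {k : ℕ} (μ : Measure ℝ) [IsProbabilityMeasure μ] (i : Fin k)
    {f : (Fin k → ℝ) → ℝ≥0∞} (hf : Measurable f) :
    ∫⁻ x, ∫⁻ t, f (Function.update x i t) ∂μ ∂(Measure.pi fun _ : Fin k => μ) =
      ∫⁻ x, f x ∂(Measure.pi fun _ : Fin k => μ) := by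
  have hg := measurable_resample μ i hf
  rw [lintegral_eq_lmarginal_univ (μ := fun _ : Fin k => μ) (0 : Fin k → ℝ),
    lintegral_eq_lmarginal_univ (μ := fun _ : Fin k => μ) (0 : Fin k → ℝ),
    lmarginal_erase' _ hg (Finset.mem_univ i), lmarginal_erase' _ hf (Finset.mem_univ i)]
  simp

lemma measurable_compRisk {k L n : ℕ} (q : Fin L → Fin k → ℝ) (u : ℝ)
    (est : (Fin n → Fin L) → Fin k → ℝ) (i : Fin k) : Measurable (compRisk q u est i) := by
  unfold compRisk pert
  fun_prop

lemma measurableSet_okSet (k n : ℕ) : MeasurableSet (okSet k n) := by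
  have : okSet k n = ⋂ i, {w | 0 ≤ pert k n w i} := by ext; simp [okSet]
  rw [this]
  refine MeasurableSet.iInter fun i => measurableSet_le measurable_const ?_
  unfold pert; fun_prop

/-! ### From coordinate slices to the full risk -/

lemma qrow_sum {k L : ℕ} {q : Fin L → Fin k → ℝ} (hk : 0 < k) (hqs : ∀ v, ∑ l, q l v = 1) :
    ∑ l, qrow q l = 1 := by
  have hk' : (k : ℝ) ≠ 0 := by positivity
  simp only [qrow, ← Finset.mul_sum]
  rw [Finset.sum_comm]
  simp [hqs, hk']

lemma dev_sum {k L : ℕ} {q : Fin L → Fin k → ℝ} (hk : 0 < k) (hqs : ∀ v, ∑ l, q l v = 1)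
    (v : Fin k) : ∑ l, dev q l v = 0 := by
  simp only [dev, Finset.sum_sub_distrib, hqs, qrow_sum hk hqs, sub_self]

lemma qrow_pos {k L : ℕ} {q : Fin L → Fin k → ℝ} (hk : 0 < k) (hq : ∀ l v, 0 < q l v)
    (l : Fin L) : 0 < qrow q l := by
  have : Nonempty (Fin k) := ⟨⟨0, hk⟩⟩
  have := Finset.sum_pos (fun v _ => hq l v) Finset.univ_nonempty
  unfold qrow
  positivity

lemma sum_update {k : ℕ} (x : Fin k → ℝ) (i : Fin k) (t : ℝ) (g : Fin k → ℝ) :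
    ∑ v, Function.update x i t v * g v = ∑ v ∈ Finset.univ.erase i, x v * g v + t * g i := by
  rw [← Finset.sum_erase_add _ _ (Finset.mem_univ i), Function.update_self]
  congr 1
  refine Finset.sum_congr rfl fun v hv => ?_
  rw [Function.update_of_ne (Finset.ne_of_mem_erase hv)]

/-- Along a line parallel to a coordinate axis, a bounded segment eventually stays in the
simplex. -/
lemma eventually_okSet {k : ℕ} (hk : 0 < k) (x : Fin k → ℝ) (i : Fin k) (T : ℝ) :
    ∀ᶠ n : ℕ in atTop, ∀ t, |t| ≤ T → Function.update x i t ∈ okSet k n := by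
  have hk' : (0 : ℝ) < k := by positivity
  set R : ℝ := ∑ v, |x v| + |T| with hR
  have hb : ∀ t, |t| ≤ T → ∀ v, |Function.update x i t v| ≤ R := by
    intro t ht v
    have h0 : 0 ≤ ∑ v, |x v| := Finset.sum_nonneg fun _ _ => abs_nonneg _
    by_cases h : v = i
    · subst h
      rw [Function.update_self]
      have := le_abs_self T
      linarith
    · rw [Function.update_of_ne h]
      have := Finset.single_le_sum (f := fun v => |x v|) (fun _ _ => abs_nonneg _)
        (Finset.mem_univ v)
      have h2 := abs_nonneg T
      linarith
  have hlarge : ∀ᶠ n : ℕ in atTop, 1 + 2 * R * k ≤ √(n : ℝ) :=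
    (Real.tendsto_sqrt_atTop.comp tendsto_natCast_atTop_atTop).eventually_ge_atTop _
  filter_upwards [hlarge] with n hn t ht v
  have hR0 : 0 ≤ R := (abs_nonneg _).trans (hb t ht v)
  have h1 : 0 ≤ 2 * R * k := by positivity
  have hs : 0 < √(n : ℝ) := by linarith
  have hmean : |(∑ v, Function.update x i t v) / k| ≤ R := by
    rw [abs_div, abs_of_pos hk', div_le_iff₀ hk']
    refine (Finset.abs_sum_le_sum_abs _ _).trans ?_
    refine (Finset.sum_le_sum fun v _ => hb t ht v).trans ?_
    simp [mul_comm]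
  have h3 : -(2 * R) ≤ Function.update x i t v - (∑ v, Function.update x i t v) / k := by
    have a1 := (abs_le.1 hmean).2
    have a2 := (abs_le.1 (hb t ht v)).1
    linarith
  have h4 : -(1 / (k : ℝ)) ≤
      (Function.update x i t v - (∑ v, Function.update x i t v) / k) / √(n : ℝ) := by
    rw [le_div_iff₀ hs]
    refine le_trans ?_ h3
    have : 2 * R ≤ 1 / (k : ℝ) * √(n : ℝ) := by
      rw [div_mul_eq_mul_div, le_div_iff₀ hk']
      linarith
    linarith
  unfold pert
  linarith

/-- Bayes bound for coordinate `i` when all other coordinates of the prior are frozen. -/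
lemma slice_bound {k L : ℕ} {q : Fin L → Fin k → ℝ} (hk : 0 < k) (hq : ∀ l v, 0 < q l v)
    (hqs : ∀ v, ∑ l, q l v = 1) {u η ζ : ℝ} (hu : 1 ≤ u) (hη : 0 < η) (hζ : 0 < ζ) (hζ1 : ζ < 1)
    {v : ℝ≥0} (hv : (v : ℝ) = η⁻¹) (i : Fin k) (x : Fin k → ℝ) :
    ∀ᶠ n : ℕ in atTop, ∀ est : (Fin n → Fin L) → Fin k → ℝ,
      ENNReal.ofReal ((1 - ζ) ^ 4 * Cmom u * ((((k : ℝ) - 1) / k) ^ u *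
          (∑ l, dev q l i ^ 2 / qrow q l + η + ζ) ^ (-(u / 2)))) ≤
        ∫⁻ t, (okSet k n).indicator (compRisk q u est i) (Function.update x i t)
          ∂gaussianReal 0 v := by
  have hk' : (0 : ℝ) < k := by positivity
  have hk1 : (1 : ℝ) ≤ k := by exact_mod_cast hk
  have ha : ∑ l, ∑ v ∈ Finset.univ.erase i, x v * dev q l v = 0 := by
    rw [Finset.sum_comm]
    simp [← Finset.mul_sum, dev_sum hk hqs]
  obtain ⟨T, hT⟩ := bayes_slice (qrow_pos hk hq) (qrow_sum hk hqs) ha (dev_sum hk hqs i) hu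
    (c := ((k : ℝ) - 1) / k) (div_nonneg (by linarith) hk'.le) hη hζ hζ1 hv
  filter_upwards [hT, eventually_okSet hk x i T, eventually_gt_atTop 0] with n h1 h2 hn est
  have hs : √(n : ℝ) ≠ 0 := by positivity
  refine (h1 fun y => √(n : ℝ) * (est y i - 1 / k) +
    (∑ v ∈ Finset.univ.erase i, x v) / k).trans ?_
  rw [← lintegral_indicator (measurableSet_le (by fun_prop) (by fun_prop))]
  refine lintegral_mono fun t => ?_
  by_cases ht : t ∈ {t : ℝ | |t| ≤ T}
  · rw [Set.indicator_of_mem ht, Set.indicator_of_mem (h2 t ht), compRisk]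
    refine le_of_eq (Finset.sum_congr rfl fun y _ => ?_)
    simp only [sum_update]
    congr 4
    have := sum_update x i t fun _ => 1
    simp only [mul_one] at this
    rw [pert, this, Function.update_self]
    field_simp
    ring
  · rw [Set.indicator_of_notMem ht]
    exact zero_le

/-- Bayes bound for coordinate `i` under the full Gaussian prior. The frozen-coordinate bound holds
from an index depending on the other coordinates; a single index works for prior mass at least
`1 - ζ`, uniformly in the estimator. -/
lemma coord_bound {k L : ℕ} {q : Fin L → Fin k → ℝ} (hk : 0 < k) (hq : ∀ l v, 0 < q l v)
    (hqs : ∀ v, ∑ l, q l v = 1) {u η ζ : ℝ} (hu : 1 ≤ u) (hη : 0 < η) (hζ : 0 < ζ) (hζ1 : ζ < 1)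
    {v : ℝ≥0} (hv : (v : ℝ) = η⁻¹) (i : Fin k) :
    ∀ᶠ n : ℕ in atTop, ∀ est : (Fin n → Fin L) → Fin k → ℝ,
      ENNReal.ofReal ((1 - ζ) ^ 5 * Cmom u * ((((k : ℝ) - 1) / k) ^ u *
          (∑ l, dev q l i ^ 2 / qrow q l + η + ζ) ^ (-(u / 2)))) ≤
        ∫⁻ w, (okSet k n).indicator (compRisk q u est i) w
          ∂(Measure.pi fun _ : Fin k => gaussianReal 0 v) := by
  set ρ : ℝ≥0∞ := ENNReal.ofReal ((1 - ζ) ^ 4 * Cmom u * ((((k : ℝ) - 1) / k) ^ u *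
          (∑ l, dev q l i ^ 2 / qrow q l + η + ζ) ^ (-(u / 2)))) with hρ
  set γ := Measure.pi fun _ : Fin k => gaussianReal 0 v with hγ
  -- `A N` is the set of frozen coordinates for which the bound holds from index `N` on. These sets
  -- increase to the whole space, and continuity from below needs no measurability.
  set A : ℕ → Set (Fin k → ℝ) := fun N => {x | ∀ n, N ≤ n →
    ∀ est : (Fin n → Fin L) → Fin k → ℝ, ρ ≤
      ∫⁻ t, (okSet k n).indicator (compRisk q u est i) (Function.update x i t)
          ∂gaussianReal 0 v} with hA
  have hU : (⋃ N, A N) = Set.univ := by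
    refine Set.eq_univ_of_forall fun x => ?_
    obtain ⟨N, hN⟩ := eventually_atTop.1 (slice_bound hk hq hqs hu hη hζ hζ1 hv i x)
    exact Set.mem_iUnion.2 ⟨N, hN⟩
  have hm : Monotone A := fun N N' h x hx n hn => hx n (h.trans hn)
  have h2 := tendsto_measure_iUnion_atTop (μ := γ) hm
  rw [hU, measure_univ] at h2
  have hlt : ENNReal.ofReal (1 - ζ) < 1 := by
    rw [← ENNReal.ofReal_one, ENNReal.ofReal_lt_ofReal_iff one_pos]; linarith
  obtain ⟨N, hN⟩ := (h2.eventually (lt_mem_nhds hlt)).exists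
  filter_upwards [eventually_ge_atTop N] with n hn est
  have hf : Measurable ((okSet k n).indicator (compRisk q u est i)) :=
    (measurable_compRisk q u est i).indicator (measurableSet_okSet k n)
  rw [← lintegral_resample (gaussianReal 0 v) i hf]
  have hg : Measurable fun x : Fin k → ℝ => ∫⁻ t, (okSet k n).indicator (compRisk q u est i)
      (Function.update x i t) ∂gaussianReal 0 v := measurable_resample _ i hf
  refine le_trans ?_ (mul_meas_ge_le_lintegral hg ρ)
  calc _ = ρ * ENNReal.ofReal (1 - ζ) := by
        rw [hρ, ← ENNReal.ofReal_mul' (by linarith)]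
        congr 1; ring
    _ ≤ ρ * γ (A N) := by
        gcongr
        exact hN.le
    _ ≤ _ := by
        gcongr
        exact fun x hx => hx n hn est

/-- The worst-case risk dominates the Bayes risk restricted to those parameters that are probability
vectors, which splits into its coordinates. -/
lemma risk_bound {k L : ℕ} {q : Fin L → Fin k → ℝ} (hk : 0 < k) (hq : ∀ l v, 0 < q l v)
    (hqs : ∀ v, ∑ l, q l v = 1) {u ζ : ℝ} (hu : 1 ≤ u) (hζ : 0 < ζ) (hζ1 : ζ < 1) :
    ∀ᶠ n : ℕ in atTop, ∀ est : (Fin n → Fin L) → Fin k → ℝ,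
      ∑ i, ENNReal.ofReal ((1 - ζ) ^ 5 * Cmom u * ((((k : ℝ) - 1) / k) ^ u *
          (∑ l, dev q l i ^ 2 / qrow q l + ζ + ζ) ^ (-(u / 2)))) ≤
        (n : ℝ≥0∞) ^ (u / 2) * risk k n u (matKernel k L q) est := by
  obtain ⟨v, hv⟩ : ∃ v : ℝ≥0, (v : ℝ) = ζ⁻¹ := ⟨⟨ζ⁻¹, by positivity⟩, rfl⟩
  filter_upwards [eventually_all.2 fun i => coord_bound hk hq hqs hu hζ hζ hζ1 hv i] with n h est
  refine (Finset.sum_le_sum fun i _ => h i est).trans ?_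
  rw [← lintegral_finsetSum _ fun i _ =>
    (measurable_compRisk q u est i).indicator (measurableSet_okSet k n)]
  have hpt : ∀ w, ∑ i, (okSet k n).indicator (compRisk q u est i) w ≤
      (n : ℝ≥0∞) ^ (u / 2) * risk k n u (matKernel k L q) est := by
    intro w
    by_cases hw : w ∈ okSet k n
    · simp only [Set.indicator_of_mem hw]
      refine le_trans (le_of_eq ?_) (mul_le_mul_right (le_risk (fun l v => (hq l v).le) hqs est
        (pert_mem_simplex hk hw)) _)
      simp only [compRisk, pert_marginal]
      rw [Finset.sum_comm, Finset.mul_sum]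
      refine Finset.sum_congr rfl fun y _ => ?_
      rw [← Finset.mul_sum, mul_left_comm]
      congr 1
      rw [ENNReal.ofReal_sum_of_nonneg fun i _ => by positivity, Finset.mul_sum]
      refine Finset.sum_congr rfl fun i _ => ?_
      have hn : (n : ℝ≥0∞) ^ (u / 2) = ENNReal.ofReal (√(n : ℝ) ^ u) := by
        rw [← ENNReal.ofReal_natCast, ENNReal.ofReal_rpow_of_nonneg (by positivity) (by linarith),
          Real.sqrt_eq_rpow, ← Real.rpow_mul (by positivity)]
        congr 2; ring
      rw [hn, ← ENNReal.ofReal_mul (by positivity), abs_mul, abs_of_nonneg (Real.sqrt_nonneg _),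
        Real.mul_rpow (by positivity) (by positivity)]
    · simp [Set.indicator_of_notMem hw]
  calc _ ≤ ∫⁻ _, (n : ℝ≥0∞) ^ (u / 2) * risk k n u (matKernel k L q) est
        ∂(Measure.pi fun _ : Fin k => gaussianReal 0 v) := lintegral_mono hpt
    _ = _ := by simp

/-! ### Fisher information of extremal schemes and conclusion -/

/-- In an extremal scheme all entries are positive: a zero entry would have ratio `0` to the row
minimum (also when that minimum is `0`, by the convention `0 / 0 = 0`), which is neither `1` nor
`e^ε`. -/
lemma memDEE_pos {k L : ℕ} {ε : ℝ} {q : Fin L → Fin k → ℝ} (hq : memDEE k L ε q) (l : Fin L)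
    (v : Fin k) : 0 < q l v := by
  refine lt_of_le_of_ne (hq.1 l v) fun h => ?_
  have h1 := hq.2.2.2 l v
  rw [← h, zero_div] at h1
  rcases h1 with h1 | h1
  · exact zero_ne_one h1
  · exact (exp_pos ε).ne h1

/-- Fisher information carried by one output symbol. A row with minimum `m` and `d` entries equal to
`e^ε m` has mean and variance explicit in `m` and `d`, and `d < k` since the minimum is attained;
the bound is then optimality of `dstar`. For `d = 0` the row carries no information. -/
lemma row_info_le {k L : ℕ} (hk : 0 < k) {ε : ℝ} (hε : 0 < ε) {dstar : ℕ}
    (hd : IsOptDstar k ε dstar) (hg : 0 < gfun ε k dstar) {q : Fin L → Fin k → ℝ}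
    (hq : memDEE k L ε q) (l : Fin L) :
    ∑ i, dev q l i ^ 2 / qrow q l ≤
      qrow q l * (k * ((exp ε - 1) ^ 2 / gfun ε k dstar)) := by
  classical
  have : Nonempty (Fin k) := ⟨⟨0, hk⟩⟩
  have hk' : (0 : ℝ) < k := by positivity
  have hr := qrow_pos hk (memDEE_pos hq) l
  have hE : 1 < exp ε := Real.one_lt_exp_iff.2 hε
  obtain ⟨v₀, hv₀⟩ := exists_eq_ciInf_of_finite (f := fun v => q l v)
  set m : ℝ := ⨅ v, q l v with hm
  have hm0 : 0 < m := hv₀ ▸ memDEE_pos hq l v₀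
  have hval : ∀ v, q l v = m ∨ q l v = exp ε * m := by
    intro v
    rcases hq.2.2.2 l v with h | h
    · left; rwa [div_eq_one_iff_eq hm0.ne'] at h
    · right; exact (div_eq_iff hm0.ne').1 h
  set S : Finset (Fin k) := {v | q l v = exp ε * m} with hS
  set d := S.card with hdd
  have hne : m ≠ exp ε * m := by nlinarith
  have hq1 : ∀ v, q l v = m + if v ∈ S then (exp ε - 1) * m else 0 := by
    intro v
    by_cases h : v ∈ S
    · rw [if_pos h, (Finset.mem_filter.1 h).2]; ring
    · rw [if_neg h, add_zero]
      exact (hval v).resolve_right fun h' => h (by simp [hS, h'])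
  have hq2 : ∀ v, q l v ^ 2 = m ^ 2 + if v ∈ S then (exp ε ^ 2 - 1) * m ^ 2 else 0 := by
    intro v
    rw [hq1]
    split_ifs <;> ring
  have hs1 : ∑ v, q l v = k * m + d * ((exp ε - 1) * m) := by
    simp only [hq1, Finset.sum_add_distrib, Finset.sum_ite_mem, Finset.univ_inter,
      Finset.sum_const, nsmul_eq_mul, Finset.card_univ, Fintype.card_fin, hdd]
  have hs2 : ∑ v, q l v ^ 2 = k * m ^ 2 + d * ((exp ε ^ 2 - 1) * m ^ 2) := by
    simp only [hq2, Finset.sum_add_distrib, Finset.sum_ite_mem, Finset.univ_inter,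
      Finset.sum_const, nsmul_eq_mul, Finset.card_univ, Fintype.card_fin, hdd]
  have hrow : qrow q l = m * (d * exp ε + k - d) / k := by
    rw [qrow, hs1]
    field_simp
    ring
  have hvar : ∑ i, dev q l i ^ 2 = m ^ 2 * (exp ε - 1) ^ 2 * (d * (k - d)) / k := by
    have h1 : ∑ i, dev q l i ^ 2 = ∑ v, q l v ^ 2 - 2 * qrow q l * ∑ v, q l v +
        k * qrow q l ^ 2 := by
      have : (k : ℝ) * qrow q l ^ 2 = ∑ _v : Fin k, qrow q l ^ 2 := by simp
      rw [this, Finset.mul_sum, ← Finset.sum_sub_distrib, ← Finset.sum_add_distrib]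
      refine Finset.sum_congr rfl fun v _ => ?_
      rw [dev]; ring
    rw [h1, hs2, hs1, hrow]
    field_simp
    ring
  have hdk : d < k := by
    have : S ⊂ Finset.univ := by
      refine Finset.ssubset_univ_iff.2 fun h => ?_
      have h1 : v₀ ∈ S := h ▸ Finset.mem_univ v₀
      exact hne (hv₀.symm.trans (Finset.mem_filter.1 h1).2)
    simpa using Finset.card_lt_card this
  have key : d * (k - d) * gfun ε k dstar ≤ ((d : ℝ) * exp ε + k - d) ^ 2 := by
    rcases Nat.eq_zero_or_pos d with h0 | h0
    · have h1 : (d : ℝ) = 0 := by exact_mod_cast h0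
      rw [h1, zero_mul, zero_mul]
      positivity
    · have h1 := hd.2 d (Finset.mem_Icc.2 ⟨h0, by omega⟩)
      have hdpos : (0 : ℝ) < d * (k - d) := by
        have : (d : ℝ) < k := by exact_mod_cast hdk
        have : (0 : ℝ) < k - d := by linarith
        exact mul_pos (by exact_mod_cast h0) this
      have h2 : gfun ε k d = ((d : ℝ) * exp ε + k - d) ^ 2 / (d * (k - d)) := rfl
      rw [h2, le_div_iff₀ hdpos] at h1
      linarith
  rw [← Finset.sum_div, div_le_iff₀ hr, hvar]
  have e1 : qrow q l * (k * ((exp ε - 1) ^ 2 / gfun ε k dstar)) * qrow q l =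
      m ^ 2 * (exp ε - 1) ^ 2 / k * (((d : ℝ) * exp ε + k - d) ^ 2 / gfun ε k dstar) := by
    rw [hrow]; field_simp
  rw [e1]
  calc m ^ 2 * (exp ε - 1) ^ 2 * (d * (k - d)) / k
      = m ^ 2 * (exp ε - 1) ^ 2 / k * (d * (k - d)) := by ring
    _ ≤ _ := by
      gcongr
      rwa [le_div_iff₀ hg]

/-- Total Fisher information of an extremal scheme at the uniform law, over all coordinates. -/
lemma info_le {k L : ℕ} (hk : 0 < k) {ε : ℝ} (hε : 0 < ε) {dstar : ℕ}
    (hd : IsOptDstar k ε dstar) (hg : 0 < gfun ε k dstar) {q : Fin L → Fin k → ℝ}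
    (hq : memDEE k L ε q) :
    ∑ i, ∑ l, dev q l i ^ 2 / qrow q l ≤ k * ((exp ε - 1) ^ 2 / gfun ε k dstar) := by
  rw [Finset.sum_comm]
  calc _ ≤ ∑ l, qrow q l * (k * ((exp ε - 1) ^ 2 / gfun ε k dstar)) :=
        Finset.sum_le_sum fun l _ => row_info_le hk hε hd hg hq l
    _ = _ := by rw [← Finset.sum_mul, qrow_sum hk hq.2.1, one_mul]

/-- Jensen's inequality for `x ↦ x ^ (-p)`, obtained by summing tangent lines. -/
lemma jensen_rpow_neg {k : ℕ} {x : Fin k → ℝ} (hx : ∀ i, 0 < x i) {m p : ℝ} (hm : 0 < m)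
    (hp : 0 ≤ p) (hs : ∑ i, x i ≤ k * m) : k * m ^ (-p) ≤ ∑ i, x i ^ (-p) := by
  have ht : ∀ i, m ^ (-p) * (1 - p * (x i / m - 1)) ≤ x i ^ (-p) := by
    intro i
    have hpos : 0 < x i / m := div_pos (hx i) hm
    have h1 : x i ^ (-p) = m ^ (-p) * (x i / m) ^ (-p) := by
      rw [← Real.mul_rpow hm.le hpos.le, mul_div_cancel₀ _ hm.ne']
    rw [h1]
    gcongr
    rw [Real.rpow_def_of_pos hpos]
    have h2 := Real.add_one_le_exp (log (x i / m) * -p)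
    have h3 := mul_le_mul_of_nonneg_right (Real.log_le_sub_one_of_pos hpos) hp
    linarith
  refine le_trans ?_ (Finset.sum_le_sum fun i _ => ht i)
  rw [← Finset.mul_sum, Finset.sum_sub_distrib, ← Finset.mul_sum, Finset.sum_sub_distrib,
    ← Finset.sum_div]
  simp only [Finset.sum_const, Finset.card_univ, Fintype.card_fin, nsmul_eq_mul, mul_one]
  have h4 : (∑ i, x i) / m ≤ k := by rwa [div_le_iff₀ hm]
  have h5 := mul_nonneg hp (sub_nonneg.2 h4)
  rw [mul_comm]
  gcongr
  linarith

lemma gfun_pos {k : ℕ} {ε : ℝ} {d : ℕ} (hd : d ∈ Finset.Icc 1 (k - 1)) : 0 < gfun ε k d := by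
  obtain ⟨h1, h2⟩ := Finset.mem_Icc.1 hd
  have hdk : (d : ℝ) + 1 ≤ k := by exact_mod_cast (by omega : d + 1 ≤ k)
  have hd1 : (1 : ℝ) ≤ d := by exact_mod_cast h1
  have hsub : (0 : ℝ) < k - d := by linarith
  have hnum : 0 < (d : ℝ) * exp ε + k - d := by
    have := exp_pos ε
    have : 0 < (d : ℝ) * exp ε := by positivity
    linarith
  unfold gfun
  positivity

/-- The asymptotic lower bound before the prior precision and the slack `ζ` are sent to zero. -/
lemma liminf_bound {k L : ℕ} (hk : 0 < k) {ε u ζ : ℝ} (hε : 0 < ε) (hu : 1 ≤ u) {dstar : ℕ}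
    (hd : IsOptDstar k ε dstar) {q : Fin L → Fin k → ℝ} (hq : memDEE k L ε q)
    (hζ : 0 < ζ) (hζ1 : ζ < 1) :
    ENNReal.ofReal ((1 - ζ) ^ 5 * Cmom u * ((((k : ℝ) - 1) / k) ^ u *
        (k * ((exp ε - 1) ^ 2 / gfun ε k dstar + ζ + ζ) ^ (-(u / 2))))) ≤
      Filter.liminf (fun n : ℕ =>
        (n : ℝ≥0∞) ^ (u/2) * minimaxRisk k n u (matKernel k L q)) atTop := by
  have hg := gfun_pos (ε := ε) hd.1
  have hk' : (0 : ℝ) < k := by positivity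
  have hk1 : (1 : ℝ) ≤ k := by exact_mod_cast hk
  have hc : 0 ≤ ((k : ℝ) - 1) / k := div_nonneg (by linarith) hk'.le
  have hz : 0 ≤ 1 - ζ := by linarith
  have hCm := Cmom_nonneg u
  refine le_liminf_of_le (by isBoundedDefault) ?_
  filter_upwards [risk_bound hk (memDEE_pos hq) hq.2.1 hu hζ hζ1,
    eventually_gt_atTop 0] with n hn hn0
  have hnt : (n : ℝ≥0∞) ^ (u / 2) ≠ ⊤ :=
    ENNReal.rpow_ne_top_of_nonneg (by linarith) (ENNReal.natCast_ne_top n)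
  have hn1 : (n : ℝ≥0∞) ^ (u / 2) ≠ 0 :=
    (ENNReal.rpow_pos (by exact_mod_cast hn0) (ENNReal.natCast_ne_top n)).ne'
  rw [_root_.minimaxRisk]
  simp only [ENNReal.mul_iInf_of_ne hn1 hnt]
  refine le_iInf₂ fun est _ => le_trans ?_ (hn est)
  have hJ : ∀ i, 0 ≤ ∑ l, dev q l i ^ 2 / qrow q l := fun i => Finset.sum_nonneg fun l _ =>
    div_nonneg (sq_nonneg _) (qrow_pos hk (memDEE_pos hq) l).le
  rw [← ENNReal.ofReal_sum_of_nonneg fun i _ => by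
    have := hJ i
    positivity, ← Finset.mul_sum, ← Finset.mul_sum]
  refine ENNReal.ofReal_le_ofReal ?_
  gcongr
  refine jensen_rpow_neg (fun i => by have := hJ i; positivity) (by positivity) (by linarith) ?_
  simp only [Finset.sum_add_distrib, Finset.sum_const, Finset.card_univ, Fintype.card_fin,
    nsmul_eq_mul]
  have := info_le hk hε hd hg hq
  linarith

theorem statement2 (k L : ℕ) (hk : 2 ≤ k) (ε u : ℝ) (hε : 0 < ε) (hu : 1 ≤ u)
    (dstar : ℕ) (hd : IsOptDstar k ε dstar)
    (q : Fin L → Fin k → ℝ) (hq : memDEE k L ε q) :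
    ENNReal.ofReal ((k:ℝ) * Cmom u * Mconst k ε dstar ^ (u/2)) ≤
      Filter.liminf (fun n : ℕ =>
        (n : ℝ≥0∞) ^ (u/2) * minimaxRisk k n u (matKernel k L q)) atTop := by
  have hk0 : 0 < k := by omega
  have hk' : (0 : ℝ) < k := by positivity
  have hk1 : (1 : ℝ) ≤ k := by exact_mod_cast hk0
  have hg := gfun_pos (ε := ε) hd.1
  have hE : 0 < exp ε - 1 := sub_pos.2 (Real.one_lt_exp_iff.2 hε)
  have hc : 0 ≤ ((k : ℝ) - 1) / k := div_nonneg (by linarith) hk'.le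
  set J : ℝ := (exp ε - 1) ^ 2 / gfun ε k dstar with hJ
  have hJ0 : 0 < J := by positivity
  set F : ℝ → ℝ := fun ζ => (1 - ζ) ^ 5 * Cmom u * ((((k : ℝ) - 1) / k) ^ u *
    (k * (J + ζ + ζ) ^ (-(u / 2)))) with hF
  have hF0 : (k : ℝ) * Cmom u * Mconst k ε dstar ^ (u / 2) = F 0 := by
    have hM : Mconst k ε dstar = (((k : ℝ) - 1) / k) ^ 2 * J⁻¹ := by
      rw [Mconst, hJ]; field_simp
    have h2 : ((((k : ℝ) - 1) / k) ^ 2) ^ (u / 2) = (((k : ℝ) - 1) / k) ^ u := by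
      rw [← Real.rpow_natCast, ← Real.rpow_mul hc]
      congr 1; push_cast; ring
    rw [hM, Real.mul_rpow (by positivity) (by positivity), h2, Real.inv_rpow hJ0.le,
      ← Real.rpow_neg hJ0.le]
    simp only [hF, add_zero, sub_zero, one_pow]
    ring
  have hcont : ContinuousAt F 0 := by
    have : ContinuousAt (fun ζ => (J + ζ + ζ) ^ (-(u / 2))) 0 :=
      ContinuousAt.rpow_const (by fun_prop) (Or.inl (by simpa using hJ0.ne'))
    simp only [hF]
    fun_prop
  rw [hF0]
  have hlim : Tendsto (fun ζ => ENNReal.ofReal (F ζ)) (𝓝[>] 0) (𝓝 (ENNReal.ofReal (F 0))) :=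
    (ENNReal.continuous_ofReal.continuousAt.comp hcont).tendsto.mono_left nhdsWithin_le_nhds
  refine le_of_tendsto hlim ?_
  filter_upwards [Ioo_mem_nhdsGT (zero_lt_one (α := ℝ))] with ζ hζ
  exact liminf_bound hk0 hε hu hd hq hζ.1 hζ.2
end

section
/- Let k ≥ 2, ε > 0 and 0 < u ≤ 2. For the scheme Q_{k,ε,d*} and the empirical estimator p̂, lim_{n→∞} n^{u/2} r_{k,n}^{ℓ_u^u}(Q_{k,ε,d*}, p̂) = k C_u M(k,ε)^{u/2}. -/
/-!
# Asymptotic worst-case risk of the empirical estimator under subset selection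

Under a distribution `p` the count `t_i` is binomial with success probability `m_i`, where
`A m_i - B = p_i`, so the scaled risk `n^{u/2} E ∑ |p̂_i - p_i|^u` is a sum of `A^u` times absolute
moments of the normalised sums of `1[i ∈ y] - m_i` (`scaled_risk_eq`).

By the central limit theorem these moments tend to `C_u (m_i (1 - m_i))^{u/2}`, and a supremum over
`p` requires the convergence to be uniform in `m_i`, including degenerate `m_i`. For `u = 2` there
is equality. For `u < 2` the identity `|x|^u = K⁻¹ ∫₀^∞ (1 - cos (t x)) t^{-1-u} dt` expresses a
moment through the real part of the characteristic function (`moment_eq_integral_cos`). The latter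
differs from that of the matching Gaussian by at most `min (2, t², 5 t³ / √n)`, so the error is
bounded by an integral depending on `u` and `n` alone, which vanishes by dominated convergence
(`moment_normSum_close`, `tendsto_momentErr`).

It remains to maximise the limit `A^u C_u ∑ (m_i (1 - m_i))^{u/2}`. Since `∑ m_i = d` and `u/2 ≤ 1`,
concavity of `x ↦ x^{u/2}` and Cauchy–Schwarz bound it by its value at `m_i = d/k`
(`sum_rpow_var_le`), attained at the uniform `p`, and `A² (d/k) (1 - d/k) = M` (`Mconst_eq`).
-/

open MeasureTheory ProbabilityTheory Filter Real
open scoped ENNReal NNReal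

/-! ### Fractional powers as cosine integrals -/

/-- The value of `∫₀^∞ (1 - cos t) t^{-1-u} dt`, the normalising constant in the representation
`|x|^u = (cosConst u)⁻¹ ∫₀^∞ (1 - cos (t x)) t^{-1-u} dt`. -/
noncomputable def cosConst (u : ℝ) : ℝ :=
  ∫ t in Set.Ioi (0:ℝ), (1 - Real.cos t) * t ^ (-1 - u)

/-- The common dominating function of every integral over `t` below. -/
lemma integrableOn_min_mul_rpow {u : ℝ} (hu0 : 0 < u) (hu2 : u < 2) :
    IntegrableOn (fun t : ℝ => min 2 (t ^ 2) * t ^ (-1 - u)) (Set.Ioi 0) := by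
  have hmeas : Measurable (fun t : ℝ => min 2 (t ^ 2) * t ^ (-1 - u)) := by fun_prop
  rw [← Set.Ioc_union_Ioi_eq_Ioi (zero_le_one (α := ℝ))]
  refine IntegrableOn.union ?_ ?_
  · have h : IntegrableOn (fun t : ℝ => t ^ (1 - u)) (Set.Ioc 0 1) := by
      rw [← intervalIntegrable_iff_integrableOn_Ioc_of_le zero_le_one]
      exact intervalIntegral.intervalIntegrable_rpow' (by linarith)
    refine h.mono' hmeas.aestronglyMeasurable ?_
    filter_upwards [ae_restrict_mem measurableSet_Ioc] with t ht
    have ht0 : 0 < t := ht.1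
    have : t ^ (1 - u) = t ^ 2 * t ^ (-1 - u) := by
      rw [← Real.rpow_natCast, ← Real.rpow_add ht0]; norm_num; ring_nf
    rw [Real.norm_of_nonneg (by positivity), this]
    gcongr
    exact min_le_right _ _
  · have h := (integrableOn_Ioi_rpow_of_lt (a := -1 - u) (c := 1) (by linarith) one_pos).const_mul 2
    refine h.mono' hmeas.aestronglyMeasurable ?_
    filter_upwards [ae_restrict_mem measurableSet_Ioi] with t ht
    have ht0 : 0 < t := lt_trans one_pos ht
    rw [Real.norm_of_nonneg (by positivity)]
    gcongr
    exact min_le_left _ _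

lemma one_sub_cos_le_min (t x : ℝ) :
    1 - Real.cos (t * x) ≤ max 1 (x ^ 2) * min 2 (t ^ 2) := by
  have h1 : 1 - Real.cos (t * x) ≤ 2 := by linarith [Real.neg_one_le_cos (t * x)]
  have h2 := Real.one_sub_sq_div_two_le_cos (x := t * x)
  have ht := sq_nonneg t
  have h3 : (t * x) ^ 2 / 2 ≤ max 1 (x ^ 2) * t ^ 2 := by
    have := mul_le_mul_of_nonneg_right (le_max_right 1 (x ^ 2)) ht
    nlinarith [sq_nonneg (t * x)]
  rcases min_cases 2 (t ^ 2) with ⟨h, _⟩ | ⟨h, _⟩ <;> rw [h]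
  · nlinarith [le_max_left 1 (x ^ 2)]
  · linarith

lemma integrableOn_one_sub_cos {u : ℝ} (hu0 : 0 < u) (hu2 : u < 2) (x : ℝ) :
    IntegrableOn (fun t : ℝ => (1 - Real.cos (t * x)) * t ^ (-1 - u)) (Set.Ioi 0) := by
  have h := (integrableOn_min_mul_rpow hu0 hu2).const_mul (max 1 (x ^ 2))
  refine h.mono' (Measurable.aestronglyMeasurable (by fun_prop)) ?_
  filter_upwards [ae_restrict_mem measurableSet_Ioi] with t ht
  have ht0 : 0 < t := ht
  have := Real.cos_le_one (t * x)
  rw [Real.norm_of_nonneg (mul_nonneg (by linarith) (by positivity)), ← mul_assoc]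
  gcongr
  exact one_sub_cos_le_min t x

lemma integral_one_sub_cos {u : ℝ} (hu0 : 0 < u) (x : ℝ) :
    ∫ t in Set.Ioi (0:ℝ), (1 - Real.cos (t * x)) * t ^ (-1 - u) = cosConst u * |x| ^ u := by
  rcases eq_or_ne x 0 with rfl | hx
  · simp [Real.zero_rpow hu0.ne']
  have hb : 0 < |x| := abs_pos.mpr hx
  have h := integral_comp_mul_left_Ioi (fun t : ℝ => (1 - Real.cos t) * t ^ (-1 - u)) 0 hb
  simp only [mul_zero, smul_eq_mul] at h
  have h2 : ∫ t in Set.Ioi (0:ℝ), (1 - Real.cos (t * x)) * t ^ (-1 - u)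
      = |x| ^ (1 + u) * ∫ t in Set.Ioi (0:ℝ),
        (1 - Real.cos (|x| * t)) * (|x| * t) ^ (-1 - u) := by
    rw [← integral_const_mul]
    refine setIntegral_congr_fun measurableSet_Ioi fun t ht => ?_
    have ht0 : 0 < t := ht
    have hc : Real.cos (t * x) = Real.cos (|x| * t) := by
      rw [← Real.cos_abs, abs_mul, abs_of_pos ht0, mul_comm]
    have hp : |x| ^ (1 + u) * |x| ^ (-1 - u) = 1 := by
      rw [← Real.rpow_add hb]; ring_nf; simp
    simp only [hc]
    rw [Real.mul_rpow hb.le ht0.le]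
    linear_combination (-(1 - Real.cos (|x| * t)) * t ^ (-1 - u)) * hp
  rw [h2, h, cosConst, Real.rpow_add hb, Real.rpow_one]
  field_simp

lemma cosConst_pos {u : ℝ} (hu0 : 0 < u) (hu2 : u < 2) : 0 < cosConst u := by
  have hi := integrableOn_one_sub_cos hu0 hu2 1
  simp only [mul_one] at hi
  rw [cosConst, setIntegral_pos_iff_support_of_nonneg_ae _ hi]
  · have hsub : Set.Ioo (0:ℝ) 1 ⊆
        (Function.support fun t : ℝ => (1 - Real.cos t) * t ^ (-1 - u)) ∩ Set.Ioi 0 := by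
      rintro t ⟨h0, h1⟩
      refine ⟨?_, h0⟩
      have : Real.cos t < 1 := by
        rw [← Real.cos_zero]
        exact Real.cos_lt_cos_of_nonneg_of_le_pi le_rfl (by linarith [Real.pi_gt_three]) h0
      have h3 : 0 < t ^ (-1 - u) := Real.rpow_pos_of_pos h0 _
      exact (mul_pos (by linarith) h3).ne'
    refine lt_of_lt_of_le ?_ (measure_mono hsub)
    simp
  · filter_upwards [ae_restrict_mem measurableSet_Ioi] with t ht
    have ht0 : 0 < t := ht
    exact mul_nonneg (by linarith [Real.cos_le_one t]) (by positivity)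

/-- An absolute moment of order `u < 2` is an integral of the real part of the characteristic
function. -/
lemma moment_eq_integral_cos {u : ℝ} (hu0 : 0 < u) (hu2 : u < 2) {Ω : Type*} [MeasurableSpace Ω]
    (P : Measure Ω) [IsProbabilityMeasure P] (X : Ω → ℝ) (hX : Measurable X)
    (hint : Integrable (fun ω => |X ω| ^ u) P) :
    IntegrableOn (fun t => (1 - ∫ ω, Real.cos (t * X ω) ∂P) * t ^ (-1 - u)) (Set.Ioi 0) ∧
    cosConst u * ∫ ω, |X ω| ^ u ∂P =
      ∫ t in Set.Ioi (0:ℝ), (1 - ∫ ω, Real.cos (t * X ω) ∂P) * t ^ (-1 - u) := by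
  have hmeas : Measurable (Function.uncurry fun (ω : Ω) (t : ℝ) =>
      (1 - Real.cos (t * X ω)) * t ^ (-1 - u)) := by
    unfold Function.uncurry; fun_prop
  have hprod : Integrable (Function.uncurry fun (ω : Ω) (t : ℝ) =>
      (1 - Real.cos (t * X ω)) * t ^ (-1 - u)) (P.prod (volume.restrict (Set.Ioi 0))) := by
    rw [integrable_prod_iff hmeas.aestronglyMeasurable]
    refine ⟨.of_forall fun ω => integrableOn_one_sub_cos hu0 hu2 (X ω), ?_⟩
    refine (hint.const_mul (cosConst u)).congr (.of_forall fun ω => ?_)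
    simp only [Function.uncurry]
    rw [← integral_one_sub_cos hu0]
    refine setIntegral_congr_fun measurableSet_Ioi fun t ht => ?_
    have ht0 : 0 < t := ht
    rw [Real.norm_of_nonneg (mul_nonneg (by linarith [Real.cos_le_one (t * X ω)]) (by positivity))]
  have hinner : ∀ t : ℝ, ∫ ω, (1 - Real.cos (t * X ω)) * t ^ (-1 - u) ∂P =
      (1 - ∫ ω, Real.cos (t * X ω) ∂P) * t ^ (-1 - u) := fun t => by
    have hc : Integrable (fun ω => Real.cos (t * X ω)) P :=
      (integrable_const (1:ℝ)).mono' (Measurable.aestronglyMeasurable (by fun_prop))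
        (.of_forall fun ω => Real.abs_cos_le_one _)
    rw [integral_mul_const, integral_sub (integrable_const _) hc]
    simp
  simp_rw [← hinner]
  refine ⟨hprod.integral_prod_right, ?_⟩
  rw [← integral_const_mul]
  simp_rw [← integral_one_sub_cos hu0]
  exact integral_integral_swap hprod

/-! ### Characteristic functions of normalised sums -/

/-- Third-order Taylor bound for `e^{ix}`, valid on the whole line. -/
lemma norm_exp_mul_I_sub_taylor_le (x : ℝ) :
    ‖Complex.exp (x * Complex.I) - (1 + x * Complex.I - (x:ℂ) ^ 2 / 2)‖ ≤ 4 * |x| ^ 3 := by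
  rcases le_total |x| 1 with h | h
  · have h1 : ‖(x * Complex.I : ℂ)‖ ≤ 1 := by simpa using h
    have h2 := Complex.exp_bound h1 (n := 3) (by norm_num)
    simp only [Finset.sum_range_succ, Finset.sum_range_zero] at h2
    norm_num [Nat.factorial, mul_pow] at h2
    have h3 := abs_nonneg x
    calc _ = ‖Complex.exp (x * Complex.I) - (1 + x * Complex.I + -(x:ℂ) ^ 2 / 2)‖ := by
          congr 1; ring
      _ ≤ _ := by
          refine h2.trans ?_
          have : 0 ≤ |x| ^ 3 := by positivity
          linarith
  · have hb : ‖Complex.exp (x * Complex.I) - (1 + x * Complex.I - (x:ℂ) ^ 2 / 2)‖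
        ≤ 1 + (1 + |x| + |x| ^ 2 / 2) := by
      refine (norm_sub_le _ _).trans ?_
      refine add_le_add (by rw [Complex.norm_exp_ofReal_mul_I]) ?_
      refine (norm_sub_le _ _).trans ?_
      refine add_le_add ((norm_add_le _ _).trans (by simp)) (by simp)
    refine hb.trans ?_
    nlinarith [mul_nonneg (sub_nonneg.2 h) (sub_nonneg.2 h), pow_pos (lt_of_lt_of_le one_pos h) 2]

lemma abs_exp_neg_sub_le {v s : ℝ} (hv0 : 0 ≤ v) (hv1 : v ≤ 1) :
    |Real.exp (-(v * s ^ 2 / 2)) - (1 - v * s ^ 2 / 2)| ≤ |s| ^ 3 := by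
  have hs := sq_abs s
  have ha := abs_nonneg s
  set a := |s|
  rw [← hs]
  have hy0 : 0 ≤ v * a ^ 2 / 2 := by positivity
  have hy1 : v * a ^ 2 / 2 ≤ a ^ 2 / 2 := by nlinarith [sq_nonneg a]
  set y := v * a ^ 2 / 2
  have hlow := Real.add_one_le_exp (-y)
  have hle : Real.exp (-y) ≤ 1 := Real.exp_le_one_iff.2 (by linarith)
  rw [abs_of_nonneg (by linarith)]
  rcases le_total a 1 with h | h
  · have hyy : y ≤ 1 := by nlinarith
    have hb := Real.exp_bound (x := -y) (by rw [abs_neg, abs_of_nonneg hy0]; exact hyy)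
      (n := 2) (by norm_num)
    simp only [Finset.sum_range_succ, Finset.sum_range_zero] at hb
    norm_num [Nat.factorial] at hb
    have hb' := (abs_le.1 hb).2
    have : y ^ 2 ≤ (a ^ 2 / 2) ^ 2 := by gcongr
    have h4 : a ^ 4 ≤ a ^ 3 := pow_le_pow_of_le_one ha h (by norm_num)
    nlinarith
  · have : a ^ 2 ≤ a ^ 3 := pow_le_pow_right₀ h (by norm_num)
    nlinarith

lemma norm_pow_sub_pow_le_mul {a b : ℂ} (ha : ‖a‖ ≤ 1) (hb : ‖b‖ ≤ 1) (n : ℕ) :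
    ‖a ^ n - b ^ n‖ ≤ n * ‖a - b‖ := by
  induction n with
  | zero => simp
  | succ n ih =>
    have : a ^ (n + 1) - b ^ (n + 1) = a ^ n * (a - b) + (a ^ n - b ^ n) * b := by ring
    rw [this]
    refine (norm_add_le _ _).trans ?_
    rw [norm_mul, norm_mul, norm_pow]
    have h1 : ‖a‖ ^ n * ‖a - b‖ ≤ 1 * ‖a - b‖ :=
      mul_le_mul_of_nonneg_right (pow_le_one₀ (norm_nonneg _) ha) (norm_nonneg _)
    have h2 : ‖a ^ n - b ^ n‖ * ‖b‖ ≤ ‖a ^ n - b ^ n‖ := mul_le_of_le_one_right (norm_nonneg _) hb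
    push_cast
    linarith

/-- Second-order expansion of the characteristic function of a centred variable bounded by `1`,
with an error that does not depend on its law. -/
lemma norm_charFun_sub_exp_le {Y : Type*} [Fintype Y] [MeasurableSpace Y]
    [MeasurableSingletonClass Y] (ν : Measure Y) [IsProbabilityMeasure ν] (X : Y → ℝ)
    (hX : ∀ y, |X y| ≤ 1) (h0 : ∫ y, X y ∂ν = 0) (s : ℝ) :
    ‖∫ y, Complex.exp ((s * X y : ℝ) * Complex.I) ∂ν
      - (Real.exp (-((∫ y, X y ^ 2 ∂ν) * s ^ 2 / 2)) : ℝ)‖ ≤ 5 * |s| ^ 3 := by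
  set v := ∫ y, X y ^ 2 ∂ν with hv
  have hv0 : 0 ≤ v := integral_nonneg fun y => sq_nonneg _
  have hv1 : v ≤ 1 := by
    have : v ≤ ∫ _, (1:ℝ) ∂ν := integral_mono .of_finite .of_finite fun y => by
      have := hX y
      rw [← sq_abs]; exact pow_le_one₀ (abs_nonneg _) this
    simpa using this
  have hT : ∫ y, (1 + (s * X y : ℝ) * Complex.I - ((s * X y : ℝ):ℂ) ^ 2 / 2) ∂ν
      = ((1 - v * s ^ 2 / 2 : ℝ) : ℂ) := by
    rw [integral_sub .of_finite .of_finite, integral_add .of_finite .of_finite, integral_mul_const,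
      integral_complex_ofReal, integral_const_mul, h0]
    have : ∀ y, ((s * X y : ℝ):ℂ) ^ 2 / 2 = ((s ^ 2 / 2 * X y ^ 2 : ℝ) : ℂ) := fun y => by
      push_cast; ring
    simp_rw [this]
    rw [integral_complex_ofReal, integral_const_mul, ← hv]
    simp
    ring
  have h1 : ‖∫ y, Complex.exp ((s * X y : ℝ) * Complex.I) ∂ν - ((1 - v * s ^ 2 / 2 : ℝ) : ℂ)‖
      ≤ 4 * |s| ^ 3 := by
    rw [← hT, ← integral_sub .of_finite .of_finite]
    refine (norm_integral_le_of_norm_le_const (C := 4 * |s| ^ 3) (.of_forall fun y => ?_)).trans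
      (by simp)
    refine (norm_exp_mul_I_sub_taylor_le _).trans ?_
    rw [abs_mul]
    have := mul_le_of_le_one_right (abs_nonneg s) (hX y)
    gcongr
  have h2 := abs_exp_neg_sub_le (s := s) hv0 hv1
  have h3 : ‖((1 - v * s ^ 2 / 2 : ℝ) : ℂ) - (Real.exp (-(v * s ^ 2 / 2)) : ℝ)‖ ≤ |s| ^ 3 := by
    rw [← Complex.ofReal_sub, Complex.norm_real, Real.norm_eq_abs, abs_sub_comm]
    exact h2
  calc _ ≤ _ + _ := norm_sub_le_norm_sub_add_norm_sub _ ((1 - v * s ^ 2 / 2 : ℝ) : ℂ) _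
    _ ≤ 4 * |s| ^ 3 + |s| ^ 3 := add_le_add h1 h3
    _ = _ := by ring

/-- The normalised sum `n^{-1/2} ∑ⱼ X(yⱼ)`. -/
noncomputable def normSum {Y : Type*} (X : Y → ℝ) (n : ℕ) (y : Fin n → Y) : ℝ :=
  (∑ j, X (y j)) / √n

lemma integral_normSum_sq {Y : Type*} [Fintype Y] [MeasurableSpace Y]
    [MeasurableSingletonClass Y] (ν : Measure Y) [IsProbabilityMeasure ν] (X : Y → ℝ)
    (h0 : ∫ y, X y ∂ν = 0) {n : ℕ} (hn : 1 ≤ n) :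
    ∫ y, normSum X n y ^ 2 ∂(Measure.pi fun _ : Fin n => ν) = ∫ y, X y ^ 2 ∂ν := by
  have hn0 : (0:ℝ) < n := by exact_mod_cast hn
  have hvar := variance_sum_pi (μ := fun _ : Fin n => ν) (X := fun _ : Fin n => X)
    (fun _ => .of_discrete)
  rw [variance_of_integral_eq_zero (Measurable.of_discrete).aemeasurable] at hvar
  · rw [Finset.sum_const, variance_of_integral_eq_zero (Measurable.of_discrete).aemeasurable h0]
      at hvar
    simp only [Finset.sum_apply, Finset.card_univ, Fintype.card_fin, nsmul_eq_mul] at hvar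
    simp only [normSum, div_pow, Real.sq_sqrt hn0.le]
    rw [integral_div, hvar]
    field_simp
  · simp only [Finset.sum_apply]
    rw [integral_finsetSum _ fun _ _ => .of_finite]
    refine Finset.sum_eq_zero fun i _ => ?_
    rw [integral_comp_eval (μ := fun _ : Fin n => ν) (f := X) (i := i)
      (Measurable.of_discrete).aestronglyMeasurable, h0]

/-- Telescoping over the `n` factors turns the one-variable expansion at `t / √n` into a bound on
the real part of the characteristic function of the normalised sum. -/
lemma abs_integral_cos_normSum_sub_le {Y : Type*} [Fintype Y] [MeasurableSpace Y]
    [MeasurableSingletonClass Y] (ν : Measure Y) [IsProbabilityMeasure ν] (X : Y → ℝ)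
    (hX : ∀ y, |X y| ≤ 1) (h0 : ∫ y, X y ∂ν = 0) {n : ℕ} (hn : 1 ≤ n) {t : ℝ} (ht : 0 < t) :
    |∫ y, Real.cos (t * normSum X n y) ∂(Measure.pi fun _ : Fin n => ν)
      - Real.exp (-((∫ y, X y ^ 2 ∂ν) * t ^ 2 / 2))| ≤ 5 * t ^ 3 / √n := by
  have hn0 : (0:ℝ) < n := by exact_mod_cast hn
  have hs : 0 < √(n:ℝ) := Real.sqrt_pos.2 hn0
  have hss : √(n:ℝ) ^ 2 = n := Real.sq_sqrt hn0.le
  set s := t / √n with hsdef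
  set v := ∫ y, X y ^ 2 ∂ν with hv
  have hv0 : 0 ≤ v := integral_nonneg fun y => sq_nonneg _
  have hφ : ∫ y, Real.cos (t * normSum X n y) ∂(Measure.pi fun _ : Fin n => ν)
      = ((∫ y, Complex.exp ((s * X y : ℝ) * Complex.I) ∂ν) ^ n).re := by
    have := integral_fintype_prod_eq_pow (ι := Fin n) (μ := ν)
      (fun y => Complex.exp ((s * X y : ℝ) * Complex.I))
    rw [Fintype.card_fin] at this
    rw [← this, ← RCLike.re_eq_complex_re, ← integral_re .of_finite]
    refine integral_congr_ae (.of_forall fun y => ?_)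
    simp only
    rw [← Complex.exp_sum, ← Finset.sum_mul, ← Complex.ofReal_sum, RCLike.re_eq_complex_re,
      Complex.exp_ofReal_mul_I_re]
    congr 1
    rw [normSum, ← Finset.mul_sum, hsdef]
    ring
  have hg : Real.exp (-(v * t ^ 2 / 2)) = (((Real.exp (-(v * s ^ 2 / 2)) : ℝ) : ℂ) ^ n).re := by
    rw [← Complex.ofReal_pow, Complex.ofReal_re, ← Real.exp_nat_mul]
    congr 1
    rw [hsdef, div_pow, hss]
    field_simp
  have hE := norm_charFun_sub_exp_le ν X hX h0 s
  rw [← hv] at hE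
  rw [hφ, hg, ← Complex.sub_re]
  refine (Complex.abs_re_le_norm _).trans ?_
  refine (norm_pow_sub_pow_le_mul ?_ ?_ n).trans ?_
  · refine (norm_integral_le_of_norm_le_const (C := 1) (.of_forall fun y => ?_)).trans (by simp)
    rw [Complex.norm_exp_ofReal_mul_I]
  · rw [Complex.norm_real, Real.norm_of_nonneg (Real.exp_pos _).le]
    exact Real.exp_le_one_iff.2 (by have : 0 ≤ v * s ^ 2 / 2 := by positivity
                                    linarith)
  · refine (mul_le_mul_of_nonneg_left hE hn0.le).trans (le_of_eq ?_)
    rw [hsdef, abs_of_pos (by positivity), div_pow]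
    nth_rewrite 1 [← hss]
    field_simp

/-! ### Uniform convergence of absolute moments -/

/-- The bound on the moment error in `moment_normSum_close`; it depends on `u` and `n` only. The
minimum in the integrand bounds the distance between `Re φ` for a normalised sum and the matching
Gaussian: `2` trivially, `t²` because both variances are at most `1`, `5 t³ / √n` by expansion. -/
noncomputable def momentErr (u : ℝ) (n : ℕ) : ℝ :=
  (∫ t in Set.Ioi (0:ℝ), min (min 2 (t ^ 2)) (5 * t ^ 3 / √n) * t ^ (-1 - u)) / cosConst u

lemma measurable_momentErr_integrand (u : ℝ) (n : ℕ) :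
    Measurable fun t : ℝ => min (min 2 (t ^ 2)) (5 * t ^ 3 / √n) * t ^ (-1 - u) := by
  fun_prop

lemma norm_momentErr_integrand_le (u : ℝ) (n : ℕ) {t : ℝ} (ht : 0 < t) :
    ‖min (min 2 (t ^ 2)) (5 * t ^ 3 / √n) * t ^ (-1 - u)‖ ≤ min 2 (t ^ 2) * t ^ (-1 - u) := by
  rw [Real.norm_of_nonneg (by positivity)]
  exact mul_le_mul_of_nonneg_right (min_le_left _ _) (by positivity)

lemma tendsto_momentErr {u : ℝ} (hu0 : 0 < u) (hu2 : u < 2) :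
    Tendsto (momentErr u) atTop (nhds 0) := by
  have h : Tendsto (fun n : ℕ => ∫ t in Set.Ioi (0:ℝ),
      min (min 2 (t ^ 2)) (5 * t ^ 3 / √n) * t ^ (-1 - u)) atTop
      (nhds (∫ _ in Set.Ioi (0:ℝ), (0:ℝ))) := by
    refine tendsto_integral_of_dominated_convergence _
      (fun n => (measurable_momentErr_integrand u n).aestronglyMeasurable)
      (integrableOn_min_mul_rpow hu0 hu2) (fun n => ?_) ?_
    · filter_upwards [ae_restrict_mem measurableSet_Ioi] with t ht
      exact norm_momentErr_integrand_le u n ht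
    · filter_upwards [ae_restrict_mem measurableSet_Ioi] with t ht
      have ht0 : 0 < t := ht
      have h1 : Tendsto (fun n : ℕ => 5 * t ^ 3 / √(n:ℝ)) atTop (nhds 0) :=
        tendsto_const_nhds.div_atTop
          (Real.tendsto_sqrt_atTop.comp tendsto_natCast_atTop_atTop)
      have h2 := ((tendsto_const_nhds (x := min 2 (t ^ 2))).min h1).mul_const (t ^ (-1 - u))
      have h3 : min (min 2 (t ^ 2)) 0 = 0 := min_eq_right (by positivity)
      rwa [h3, zero_mul] at h2
  have h' := h.div_const (cosConst u)
  rw [integral_zero, zero_div] at h'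
  exact h'

/-- Scaled absolute moments of the standard normal law through its characteristic function. -/
lemma cosConst_mul_Cmom {u : ℝ} (hu0 : 0 < u) (hu2 : u < 2) {v : ℝ} (hv : 0 ≤ v) :
    IntegrableOn (fun t => (1 - Real.exp (-(v * t ^ 2 / 2))) * t ^ (-1 - u)) (Set.Ioi 0) ∧
    cosConst u * (Cmom u * v ^ (u / 2)) =
      ∫ t in Set.Ioi (0:ℝ), (1 - Real.exp (-(v * t ^ 2 / 2))) * t ^ (-1 - u) := by
  have habs : ∀ x : ℝ, |√v * x| ^ u = v ^ (u / 2) * |x| ^ u := fun x => by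
    rw [abs_mul, Real.mul_rpow (abs_nonneg _) (abs_nonneg _), abs_of_nonneg (Real.sqrt_nonneg _),
      Real.sqrt_eq_rpow, ← Real.rpow_mul hv]
    ring_nf
  have hI : Integrable (fun x : ℝ => |x| ^ u) (gaussianReal 0 1) := by
    have := (memLp_id_gaussianReal (μ := 0) (v := 1) u.toNNReal).integrable_norm_rpow'
    simpa [Real.coe_toNNReal _ hu0.le] using this
  have hcos : ∀ t : ℝ, ∫ x, Real.cos (t * (√v * x)) ∂(gaussianReal 0 1)
      = Real.exp (-(v * t ^ 2 / 2)) := fun t => by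
    have h := congrArg Complex.re (charFun_gaussianReal (μ := 0) (v := 1) (t * √v))
    rw [charFun_apply_real, ← RCLike.re_eq_complex_re, ← integral_re] at h
    · have e : ∀ x : ℝ, RCLike.re (Complex.exp (((t * √v : ℝ):ℂ) * x * Complex.I))
          = Real.cos (t * (√v * x)) := fun x => by
        rw [RCLike.re_eq_complex_re, ← Complex.ofReal_mul, Complex.exp_ofReal_mul_I_re, mul_assoc]
      simp_rw [e] at h
      rw [h, RCLike.re_eq_complex_re]
      have e2 : ((t * √v : ℝ) : ℂ) * ((0:ℝ):ℂ) * Complex.I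
          - (((1:ℝ≥0):ℝ):ℂ) * ((t * √v : ℝ) : ℂ) ^ 2 / 2 = ((-(v * t ^ 2 / 2) : ℝ) : ℂ) := by
        rw [← Complex.ofReal_pow, mul_pow, Real.sq_sqrt hv]
        push_cast
        ring
      rw [e2, ← Complex.ofReal_exp, Complex.ofReal_re]
    · refine (integrable_const (1:ℝ)).mono' (Measurable.aestronglyMeasurable (by fun_prop))
        (.of_forall fun x => ?_)
      rw [← Complex.ofReal_mul, Complex.norm_exp_ofReal_mul_I]
  have key := moment_eq_integral_cos hu0 hu2 (gaussianReal 0 1) (fun x => √v * x) (by fun_prop)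
    (by simp_rw [habs]; exact hI.const_mul _)
  simp_rw [hcos, habs, integral_const_mul] at key
  rw [Cmom, mul_comm (∫ x, |x| ^ u ∂(gaussianReal 0 1))]
  exact key

lemma Cmom_two : Cmom 2 = 1 := by
  have h := variance_id_gaussianReal (μ := 0) (v := 1)
  rw [variance_of_integral_eq_zero aemeasurable_id (by simp)] at h
  simpa [Cmom] using h

/-- Uniform convergence of absolute moments in the central limit theorem: the error is bounded by
`momentErr u n` for every centred variable bounded by `1` on a finite probability space, with no
lower bound on the variance. -/
lemma moment_normSum_close {u : ℝ} (hu0 : 0 < u) (hu2 : u < 2) {Y : Type*} [Fintype Y]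
    [MeasurableSpace Y] [MeasurableSingletonClass Y] (ν : Measure Y) [IsProbabilityMeasure ν]
    (X : Y → ℝ) (hX : ∀ y, |X y| ≤ 1) (h0 : ∫ y, X y ∂ν = 0) {n : ℕ} (hn : 1 ≤ n) :
    |∫ y, |normSum X n y| ^ u ∂(Measure.pi fun _ : Fin n => ν)
      - Cmom u * (∫ y, X y ^ 2 ∂ν) ^ (u / 2)| ≤ momentErr u n := by
  have hc := cosConst_pos hu0 hu2
  set v := ∫ y, X y ^ 2 ∂ν with hv
  have hv0 : 0 ≤ v := integral_nonneg fun y => sq_nonneg _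
  have hv1 : v ≤ 1 := by
    have : v ≤ ∫ _, (1:ℝ) ∂ν := integral_mono .of_finite .of_finite fun y => by
      have := hX y
      rw [← sq_abs]; exact pow_le_one₀ (abs_nonneg _) this
    simpa using this
  obtain ⟨i1, e1⟩ := moment_eq_integral_cos hu0 hu2 (Measure.pi fun _ : Fin n => ν)
    (normSum X n) .of_discrete .of_finite
  obtain ⟨i2, e2⟩ := cosConst_mul_Cmom hu0 hu2 hv0
  rw [momentErr, le_div_iff₀ hc, mul_comm]
  nth_rewrite 1 [← abs_of_pos hc]
  rw [← abs_mul, mul_sub,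
    e1, e2, ← integral_sub i1 i2, ← Real.norm_eq_abs]
  have hmono := (integrableOn_min_mul_rpow hu0 hu2).mono'
    (measurable_momentErr_integrand u n).aestronglyMeasurable
    (by filter_upwards [ae_restrict_mem measurableSet_Ioi] with t ht
        exact norm_momentErr_integrand_le u n ht)
  refine norm_integral_le_of_norm_le hmono ?_
  filter_upwards [ae_restrict_mem measurableSet_Ioi] with t ht
  have ht0 : 0 < t := ht
  rw [← sub_mul, norm_mul, Real.norm_of_nonneg (Real.rpow_nonneg ht0.le _), Real.norm_eq_abs]
  gcongr
  set c := ∫ y, Real.cos (t * normSum X n y) ∂(Measure.pi fun _ : Fin n => ν) with hcdef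
  have hcl : -1 ≤ c ∧ c ≤ 1 := by
    have := norm_integral_le_of_norm_le_const (C := 1) (μ := Measure.pi fun _ : Fin n => ν)
      (f := fun y => Real.cos (t * normSum X n y)) (.of_forall fun y => Real.abs_cos_le_one _)
    exact abs_le.1 (by simpa using this)
  have hcv : 1 - v * t ^ 2 / 2 ≤ c := by
    have : ∫ y, (1 - (t ^ 2 / 2) * normSum X n y ^ 2) ∂(Measure.pi fun _ : Fin n => ν) ≤ c :=
      integral_mono .of_finite .of_finite fun y => by
        have := Real.one_sub_sq_div_two_le_cos (x := t * normSum X n y)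
        simp only
        linarith [mul_pow t (normSum X n y) 2]
    rw [integral_sub .of_finite .of_finite, integral_const_mul, integral_normSum_sq ν X h0 hn,
      ← hv] at this
    simp at this
    linarith
  have he1 : Real.exp (-(v * t ^ 2 / 2)) ≤ 1 := Real.exp_le_one_iff.2 (by
    have : 0 ≤ v * t ^ 2 / 2 := by positivity
    linarith)
  have he0 := Real.exp_pos (-(v * t ^ 2 / 2))
  have he2 := Real.add_one_le_exp (-(v * t ^ 2 / 2))
  have hvt : v * t ^ 2 ≤ t ^ 2 := mul_le_of_le_one_left (sq_nonneg t) hv1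
  refine le_min (le_min ?_ ?_) ?_
  · rw [abs_le]; constructor <;> linarith
  · rw [abs_le]; constructor <;> linarith
  · have h := abs_integral_cos_normSum_sub_le ν X hX h0 hn ht0
    rw [abs_sub_comm] at h
    rwa [sub_sub_sub_cancel_left]

/-! ### Counting subsets of fixed size -/

/-- The indicator `1[i ∈ y]` as a real number. -/
def ind {k d : ℕ} (i : Fin k) (y : Out k d) : ℝ := if i ∈ y.1 then 1 else 0

lemma ind_sum {k d : ℕ} (y : Out k d) : ∑ i, ind i y = d := by
  simp [ind, y.2]

lemma sum_out_eq {k d : ℕ} (f : Finset (Fin k) → ℝ) :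
    ∑ y : Out k d, f y.1 = ∑ S ∈ Finset.powersetCard d Finset.univ, f S := by
  refine (Finset.sum_subtype _ (fun S => ?_) f).symm
  simp [Finset.mem_powersetCard]

lemma sum_out_one (k d : ℕ) : ∑ _y : Out k d, (1:ℝ) = k.choose d := by
  rw [sum_out_eq (fun _ => 1)]
  simp

lemma sum_out_one_sub_ind {k d : ℕ} (i : Fin k) :
    ∑ y : Out k d, (1 - ind i y) = (k - 1).choose d := by
  have h : ∑ y : Out k d, (1 - ind i y)
      = ∑ S ∈ Finset.powersetCard d Finset.univ, if i ∉ S then (1:ℝ) else 0 := by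
    rw [← sum_out_eq (fun S => if i ∉ S then (1:ℝ) else 0)]
    refine Finset.sum_congr rfl fun y _ => ?_
    by_cases hy : i ∈ y.1 <;> simp [ind, hy]
  have hf : (Finset.powersetCard d (Finset.univ : Finset (Fin k))).filter (fun S => i ∉ S)
      = Finset.powersetCard d (Finset.univ.erase i) := by
    ext S
    simp only [Finset.mem_filter, Finset.mem_powersetCard, Finset.subset_erase]
    tauto
  rw [h, Finset.sum_ite, hf]
  simp

lemma sum_out_one_sub_ind_mul {k d : ℕ} {i j : Fin k} (hij : i ≠ j) :
    ∑ y : Out k d, (1 - ind i y) * (1 - ind j y) = (k - 2).choose d := by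
  have h : ∑ y : Out k d, (1 - ind i y) * (1 - ind j y)
      = ∑ S ∈ Finset.powersetCard d Finset.univ, if i ∉ S ∧ j ∉ S then (1:ℝ) else 0 := by
    rw [← sum_out_eq (fun S => if i ∉ S ∧ j ∉ S then (1:ℝ) else 0)]
    refine Finset.sum_congr rfl fun y _ => ?_
    by_cases hy : i ∈ y.1 <;> by_cases hy' : j ∈ y.1 <;> simp [ind, hy, hy']
  have hf : (Finset.powersetCard d (Finset.univ : Finset (Fin k))).filter
      (fun S => i ∉ S ∧ j ∉ S) = Finset.powersetCard d ((Finset.univ.erase i).erase j) := by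
    ext S
    simp only [Finset.mem_filter, Finset.mem_powersetCard, Finset.subset_erase]
    tauto
  rw [h, Finset.sum_ite, hf]
  simp only [Finset.sum_const, Finset.card_powersetCard, nsmul_eq_mul, mul_one]
  rw [Finset.card_erase_of_mem (by simp [hij.symm]), Finset.card_erase_of_mem (by simp)]
  simp [Nat.sub_sub]

/-- Every binomial coefficient that occurs is an explicit multiple of `(k-1).choose d`. -/
lemma choose_facts {k d : ℕ} (hk : 2 ≤ k) (hd1 : 1 ≤ d) (hd2 : d ≤ k - 1) :
    (0:ℝ) < (k - 1).choose d ∧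
    ((k - 1).choose d : ℝ) * k = k.choose d * ((k:ℝ) - d) ∧
    ((k - 2).choose d : ℝ) * ((k:ℝ) - 1) = (k - 1).choose d * ((k:ℝ) - 1 - d) ∧
    (k.choose d : ℝ) = (k - 1).choose (d - 1) + (k - 1).choose d := by
  obtain ⟨m, rfl⟩ : ∃ m, k = m + 2 := ⟨k - 2, by omega⟩
  obtain ⟨e, rfl⟩ : ∃ e, d = e + 1 := ⟨d - 1, by omega⟩
  simp only [Nat.add_sub_cancel, show m + 2 - 1 = m + 1 by omega] at *
  refine ⟨by exact_mod_cast Nat.choose_pos hd2, ?_, ?_, ?_⟩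
  · have h := Nat.choose_mul_succ_eq (m + 1) (e + 1)
    have h' : (((m + 1).choose (e + 1) * (m + 1 + 1) : ℕ) : ℝ)
        = (((m + 1 + 1).choose (e + 1) * (m + 1 + 1 - (e + 1)) : ℕ) : ℝ) := by rw [h]
    rw [Nat.cast_mul, Nat.cast_mul, Nat.cast_sub (by omega)] at h'
    exact h'
  · have h := Nat.choose_mul_succ_eq m (e + 1)
    have h' : ((m.choose (e + 1) * (m + 1) : ℕ) : ℝ)
        = (((m + 1).choose (e + 1) * (m + 1 - (e + 1)) : ℕ) : ℝ) := by rw [h]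
    rw [Nat.cast_mul, Nat.cast_mul, Nat.cast_sub (by omega)] at h'
    push_cast at h' ⊢
    linear_combination h'
  · exact_mod_cast Nat.choose_succ_succ (m + 1) e

lemma schemeP_eq (k : ℕ) (ε : ℝ) (d : ℕ) (i : Fin k) (y : Out k d) :
    schemeP k ε d i y = (1 + (Real.exp ε - 1) * ind i y) /
      ((k-1).choose (d-1) * Real.exp ε + (k-1).choose d) := by
  unfold schemeP ind
  congr 1
  split_ifs <;> ring

/-! ### The scheme, its marginals and the estimator -/

section Scheme

variable {k d : ℕ} {ε : ℝ}

lemma schemeP_nonneg (i : Fin k) (y : Out k d) : 0 ≤ schemeP k ε d i y := by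
  unfold schemeP; split_ifs <;> positivity

lemma sum_ind (i : Fin k) : ∑ y : Out k d, ind i y = (k.choose d : ℝ) - (k - 1).choose d := by
  have h1 := sum_out_one_sub_ind (d := d) i
  rw [Finset.sum_sub_distrib, sum_out_one] at h1
  linarith

lemma sum_ind_mul {i j : Fin k} (hij : i ≠ j) :
    ∑ y : Out k d, ind i y * ind j y
      = (k.choose d : ℝ) - 2 * (k - 1).choose d + (k - 2).choose d := by
  have h := sum_out_one_sub_ind_mul (d := d) hij
  have e : ∀ y : Out k d, (1 - ind i y) * (1 - ind j y)
      = 1 - ind i y - ind j y + ind i y * ind j y := fun y => by ring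
  simp_rw [e] at h
  rw [Finset.sum_add_distrib, Finset.sum_sub_distrib, Finset.sum_sub_distrib, sum_out_one,
    sum_ind, sum_ind] at h
  linarith

lemma sum_schemeP (hk : 2 ≤ k) (hd1 : 1 ≤ d) (hd2 : d ≤ k - 1) (i : Fin k) :
    ∑ y : Out k d, schemeP k ε d i y = 1 := by
  obtain ⟨h1, -, -, h4⟩ := choose_facts hk hd1 hd2
  have hZ : 0 < ((k-1).choose (d-1) * Real.exp ε + (k-1).choose d : ℝ) := by positivity
  simp_rw [schemeP_eq]
  rw [← Finset.sum_div, Finset.sum_add_distrib, ← Finset.mul_sum, sum_out_one, sum_ind,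
    div_eq_one_iff_eq hZ.ne', h4]
  ring

/-- The constants `A` and `B` make the estimator unbiased for every point mass. -/
lemma Aconst_mul_sum_schemeP_ind (hk : 2 ≤ k) (hd1 : 1 ≤ d) (hd2 : d ≤ k - 1) (hε : 0 < ε)
    (i j : Fin k) :
    Aconst k d ε * ∑ y : Out k d, schemeP k ε d i y * ind j y - Bconst k d ε
      = if i = j then 1 else 0 := by
  obtain ⟨h1, h2, h3, h4⟩ := choose_facts hk hd1 hd2
  have hE : 0 < Real.exp ε - 1 := by linarith [Real.add_one_lt_exp hε.ne']
  have hd : (1:ℝ) ≤ d := by exact_mod_cast hd1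
  have hkd : (0:ℝ) < (k:ℝ) - d := by
    have : d < k := by omega
    have : (d:ℝ) < k := by exact_mod_cast this
    linarith
  have hk1 : (0:ℝ) < (k:ℝ) - 1 := by linarith
  set e := Real.exp ε with he
  set c : ℝ := ((k-1).choose d : ℝ) with hc
  obtain ⟨w, hwd⟩ : ∃ w : ℝ, w = d * e + (k - d) := ⟨_, rfl⟩
  have hw : 0 < w := by rw [hwd]; positivity
  have e0 : (k.choose d : ℝ) = c * k / (k - d) := by rw [eq_div_iff hkd.ne', h2]
  have e1 : ((k-1).choose (d-1) : ℝ) = c * d / (k - d) := by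
    rw [eq_div_iff hkd.ne']; linear_combination (-((k:ℝ) - d)) * h4 - h2
  have e2 : ((k-2).choose d : ℝ) = c * (k - 1 - d) / (k - 1) := by rw [eq_div_iff hk1.ne', h3]
  have hS : ∑ y : Out k d, schemeP k ε d i y * ind j y
      = (∑ y : Out k d, ind j y + (e - 1) * ∑ y : Out k d, ind i y * ind j y) /
        (((k-1).choose (d-1) : ℝ) * e + c) := by
    simp_rw [schemeP_eq]
    rw [Finset.mul_sum, ← Finset.sum_add_distrib, Finset.sum_div]
    refine Finset.sum_congr rfl fun y _ => ?_
    ring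
  have hZ : ((k-1).choose (d-1) : ℝ) * e + c = c * w / (k - d) := by
    rw [e1, hwd]; field_simp
  have hA : Aconst k d ε = (k - 1) * w / (d * ((k - d) * (e - 1))) := by
    rw [Aconst, ← he, hwd]; field_simp
  rw [hS, hZ, sum_ind, ← hc, e0, hA, Bconst, ← he]
  split_ifs with hij
  · subst hij
    have : ∀ y : Out k d, ind i y * ind i y = ind i y := fun y => by simp [ind]
    simp_rw [this]
    rw [sum_ind, ← hc, e0]
    field_simp
    ring
  · rw [sum_ind_mul hij, ← hc, e0, e2]
    field_simp
    ring

lemma integral_schemeKernel (i : Fin k) (f : Out k d → ℝ) :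
    ∫ y, f y ∂(schemeKernel k ε d i) = ∑ y, schemeP k ε d i y * f y := by
  have : schemeKernel k ε d i
      = ∑ y : Out k d, ENNReal.ofReal (schemeP k ε d i y) • Measure.dirac y := rfl
  rw [this, integral_finsetSum_measure]
  · refine Finset.sum_congr rfl fun y _ => ?_
    rw [integral_smul_measure, integral_dirac, ENNReal.toReal_ofReal (schemeP_nonneg i y),
      smul_eq_mul]
  · exact fun y _ => (integrable_dirac (by simp)).smul_measure ENNReal.ofReal_ne_top

instance schemeKernel_finite (i : Fin k) : IsFiniteMeasure (schemeKernel k ε d i) := by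
  have : schemeKernel k ε d i
      = ∑ y : Out k d, ENNReal.ofReal (schemeP k ε d i y) • Measure.dirac y := rfl
  rw [this]
  refine ⟨?_⟩
  simp

lemma schemeKernel_univ (hk : 2 ≤ k) (hd1 : 1 ≤ d) (hd2 : d ≤ k - 1) (i : Fin k) :
    schemeKernel k ε d i Set.univ = 1 := by
  have : schemeKernel k ε d i
      = ∑ y : Out k d, ENNReal.ofReal (schemeP k ε d i y) • Measure.dirac y := rfl
  rw [this]
  simp [← ENNReal.ofReal_sum_of_nonneg (fun y _ => schemeP_nonneg (ε := ε) i y),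
    sum_schemeP hk hd1 hd2]

lemma isProbabilityMeasure_marginal (hk : 2 ≤ k) (hd1 : 1 ≤ d) (hd2 : d ≤ k - 1)
    {p : Fin k → ℝ} (hp : p ∈ simplex k) :
    IsProbabilityMeasure (marginal (schemeKernel k ε d) p) := by
  refine ⟨?_⟩
  simp [marginal, schemeKernel_univ hk hd1 hd2,
    ← ENNReal.ofReal_sum_of_nonneg (fun y _ => hp.1 y), hp.2]

lemma integral_marginal {p : Fin k → ℝ} (hp : p ∈ simplex k) (f : Out k d → ℝ) :
    ∫ y, f y ∂(marginal (schemeKernel k ε d) p)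
      = ∑ i, p i * ∑ y, schemeP k ε d i y * f y := by
  rw [marginal, integral_finsetSum_measure]
  · refine Finset.sum_congr rfl fun i _ => ?_
    rw [integral_smul_measure, integral_schemeKernel, ENNReal.toReal_ofReal (hp.1 i), smul_eq_mul]
  · exact fun i _ => Integrable.of_finite.smul_measure ENNReal.ofReal_ne_top

/-- `m_i = P(i ∈ y)`, the success probability of the `i`-th count under the marginal `pQ`. -/
noncomputable def succProb (k : ℕ) (ε : ℝ) (d : ℕ) (p : Fin k → ℝ) (i : Fin k) : ℝ :=
  ∫ y : Out k d, ind i y ∂(marginal (schemeKernel k ε d) p)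

lemma Aconst_mul_succProb (hk : 2 ≤ k) (hd1 : 1 ≤ d) (hd2 : d ≤ k - 1) (hε : 0 < ε)
    {p : Fin k → ℝ} (hp : p ∈ simplex k) (j : Fin k) :
    Aconst k d ε * succProb k ε d p j - Bconst k d ε = p j := by
  rw [succProb, integral_marginal hp]
  have h : ∀ i, p i * (Aconst k d ε * (∑ y : Out k d, schemeP k ε d i y * ind j y)
      - Bconst k d ε) = p i * if i = j then 1 else 0 := fun i => by
    rw [Aconst_mul_sum_schemeP_ind hk hd1 hd2 hε]
  have h2 := Finset.sum_congr (rfl : (Finset.univ : Finset (Fin k)) = _) fun i _ => h i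
  simp only [mul_ite, mul_one, mul_zero, Finset.sum_ite_eq', Finset.mem_univ, if_true] at h2
  rw [← h2]
  simp_rw [mul_sub]
  rw [Finset.sum_sub_distrib, ← Finset.sum_mul, hp.2, one_mul, Finset.mul_sum]
  congr 1
  refine Finset.sum_congr rfl fun i _ => ?_
  ring

lemma sum_succProb (hk : 2 ≤ k) (hd1 : 1 ≤ d) (hd2 : d ≤ k - 1)
    {p : Fin k → ℝ} (hp : p ∈ simplex k) : ∑ i, succProb k ε d p i = d := by
  have := isProbabilityMeasure_marginal (ε := ε) hk hd1 hd2 hp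
  simp only [succProb]
  rw [← integral_finsetSum _ fun _ _ => .of_finite]
  simp_rw [ind_sum]
  simp

lemma succProb_mem (hk : 2 ≤ k) (hd1 : 1 ≤ d) (hd2 : d ≤ k - 1)
    {p : Fin k → ℝ} (hp : p ∈ simplex k) (i : Fin k) :
    0 ≤ succProb k ε d p i ∧ succProb k ε d p i ≤ 1 := by
  have := isProbabilityMeasure_marginal (ε := ε) hk hd1 hd2 hp
  have h : ∀ y : Out k d, 0 ≤ ind i y ∧ ind i y ≤ 1 := fun y => by
    unfold ind; split_ifs <;> norm_num
  refine ⟨integral_nonneg fun y => (h y).1, ?_⟩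
  have := integral_mono (μ := marginal (schemeKernel k ε d) p) .of_finite .of_finite
    (fun y : Out k d => (h y).2)
  simpa [succProb] using this

lemma Aconst_pos (hd1 : 1 ≤ d) (hd2 : d ≤ k - 1) (hε : 0 < ε) : 0 < Aconst k d ε := by
  have hE : 0 < Real.exp ε - 1 := by linarith [Real.add_one_lt_exp hε.ne']
  have hd : (1:ℝ) ≤ d := by exact_mod_cast hd1
  have hkd : (0:ℝ) < (k:ℝ) - d := by
    have : d < k := by omega
    have : (d:ℝ) < k := by exact_mod_cast this
    linarith
  have hk1 : (0:ℝ) < (k:ℝ) - 1 := by linarith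
  unfold Aconst
  positivity

lemma Mconst_eq (hd1 : 1 ≤ d) (hd2 : d ≤ k - 1) (hε : 0 < ε) :
    Mconst k ε d = Aconst k d ε ^ 2 * ((d:ℝ) / k * (1 - d / k)) := by
  have hE : 0 < Real.exp ε - 1 := by linarith [Real.add_one_lt_exp hε.ne']
  have hd : (1:ℝ) ≤ d := by exact_mod_cast hd1
  have hkd : (0:ℝ) < (k:ℝ) - d := by
    have : d < k := by omega
    have : (d:ℝ) < k := by exact_mod_cast this
    linarith
  have hk1 : (0:ℝ) < (k:ℝ) - 1 := by linarith
  have hk0 : (0:ℝ) < (k:ℝ) := by linarith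
  unfold Mconst Aconst gfun
  field_simp
  ring

/-- The centred indicator `1[i ∈ y] - m_i`. -/
noncomputable def cind (k : ℕ) (ε : ℝ) (d : ℕ) (p : Fin k → ℝ) (i : Fin k) (y : Out k d) : ℝ :=
  ind i y - succProb k ε d p i

lemma cind_facts (hk : 2 ≤ k) (hd1 : 1 ≤ d) (hd2 : d ≤ k - 1)
    {p : Fin k → ℝ} (hp : p ∈ simplex k) (i : Fin k) :
    (∀ y, |cind k ε d p i y| ≤ 1) ∧
    ∫ y, cind k ε d p i y ∂(marginal (schemeKernel k ε d) p) = 0 ∧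
    ∫ y, cind k ε d p i y ^ 2 ∂(marginal (schemeKernel k ε d) p)
      = succProb k ε d p i * (1 - succProb k ε d p i) := by
  have := isProbabilityMeasure_marginal (ε := ε) hk hd1 hd2 hp
  obtain ⟨h0, h1⟩ := succProb_mem (ε := ε) hk hd1 hd2 hp i
  refine ⟨fun y => ?_, ?_, ?_⟩
  · unfold cind ind
    rw [abs_le]
    split_ifs <;> constructor <;> linarith
  · simp only [cind]
    rw [integral_sub .of_finite .of_finite]
    simp [succProb]
  · have e : ∀ y, cind k ε d p i y ^ 2
        = (1 - 2 * succProb k ε d p i) * ind i y + succProb k ε d p i ^ 2 := fun y => by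
      unfold cind ind
      split_ifs <;> ring
    simp_rw [e]
    rw [integral_add .of_finite .of_finite, integral_const_mul]
    have : ∫ y : Out k d, ind i y ∂(marginal (schemeKernel k ε d) p) = succProb k ε d p i := rfl
    rw [this]
    simp
    ring

lemma empEst_sub (hk : 2 ≤ k) (hd1 : 1 ≤ d) (hd2 : d ≤ k - 1) (hε : 0 < ε)
    {p : Fin k → ℝ} (hp : p ∈ simplex k) (i : Fin k) {n : ℕ} (hn : 1 ≤ n)
    (y : Fin n → Out k d) :
    empEst k d n ε y i - p i = Aconst k d ε * (normSum (cind k ε d p i) n y / √n) := by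
  have hn0 : (0:ℝ) < n := by exact_mod_cast hn
  have ht : (tcount i y : ℝ) = ∑ j, ind i (y j) := by
    simp [tcount, ind]
  have hs : ∑ j, cind k ε d p i (y j) = tcount i y - n * succProb k ε d p i := by
    simp [cind, ht]
  rw [empEst, normSum, hs, div_div, Real.mul_self_sqrt hn0.le,
    ← Aconst_mul_succProb hk hd1 hd2 hε hp i]
  field_simp
  ring

end Scheme

/-! ### The worst-case risk -/

/-- Among success probabilities with sum `d`, the constant vector maximises the limiting risk. -/
lemma sum_rpow_var_le {k d : ℕ} (hk : 0 < k) {r : ℝ} (hr0 : 0 ≤ r) (hr1 : r ≤ 1) {m : Fin k → ℝ}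
    (hm : ∀ i, 0 ≤ m i ∧ m i ≤ 1) (hsum : ∑ i, m i = d) :
    ∑ i, (m i * (1 - m i)) ^ r ≤ k * ((d:ℝ) / k * (1 - d / k)) ^ r := by
  have hk0 : (0:ℝ) < k := by exact_mod_cast hk
  have hx : ∀ i, 0 ≤ m i * (1 - m i) := fun i =>
    mul_nonneg (hm i).1 (by linarith [(hm i).2])
  have hJ := (Real.concaveOn_rpow hr0 hr1).le_map_sum (t := Finset.univ)
    (w := fun _ : Fin k => (1:ℝ) / k) (p := fun i => m i * (1 - m i))
    (fun _ _ => by positivity) (by simp [hk0.ne']) (fun i _ => hx i)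
  simp only [smul_eq_mul] at hJ
  rw [← Finset.mul_sum, ← Finset.mul_sum] at hJ
  -- Cauchy–Schwarz: the mean of `mᵢ(1 - mᵢ)` is largest when all `mᵢ` equal `d / k`.
  have hCS : (d:ℝ) ^ 2 ≤ k * ∑ i, m i ^ 2 := by
    have := sq_sum_le_card_mul_sum_sq (s := Finset.univ) (f := m)
    simpa [hsum] using this
  have hmean : 1 / (k:ℝ) * ∑ i, m i * (1 - m i) ≤ (d:ℝ) / k * (1 - d / k) := by
    have e : ∑ i, m i * (1 - m i) = d - ∑ i, m i ^ 2 := by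
      rw [← hsum, ← Finset.sum_sub_distrib]
      exact Finset.sum_congr rfl fun i _ => by ring
    rw [e]
    have : (d:ℝ) ^ 2 / k ≤ ∑ i, m i ^ 2 := by rw [div_le_iff₀ hk0]; linarith
    have e2 : (d:ℝ) / k * (1 - d / k) = 1 / k * (d - d ^ 2 / k) := by field_simp
    rw [e2]
    gcongr
  have h0 : 0 ≤ 1 / (k:ℝ) * ∑ i, m i * (1 - m i) :=
    mul_nonneg (by positivity) (Finset.sum_nonneg fun i _ => hx i)
  have h1 := hJ.trans (Real.rpow_le_rpow h0 hmean hr0)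
  rw [one_div, inv_mul_le_iff₀ hk0] at h1
  exact h1

/-- Uniform moment convergence on the full range `0 < u ≤ 2`; at `u = 2` the moments agree
exactly. -/
lemma exists_moment_err {u : ℝ} (hu0 : 0 < u) (hu2 : u ≤ 2) :
    ∃ δ : ℕ → ℝ, Tendsto δ atTop (nhds 0) ∧
      ∀ {Y : Type} [Fintype Y] [MeasurableSpace Y] [MeasurableSingletonClass Y] (ν : Measure Y)
        [IsProbabilityMeasure ν] (X : Y → ℝ), (∀ y, |X y| ≤ 1) → ∫ y, X y ∂ν = 0 →
        ∀ n : ℕ, 1 ≤ n → |∫ y, |normSum X n y| ^ u ∂(Measure.pi fun _ : Fin n => ν)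
          - Cmom u * (∫ y, X y ^ 2 ∂ν) ^ (u / 2)| ≤ δ n := by
  rcases hu2.lt_or_eq with h | rfl
  · exact ⟨momentErr u, tendsto_momentErr hu0 h, fun ν _ X hX h0 n hn =>
      moment_normSum_close hu0 h ν X hX h0 hn⟩
  · refine ⟨fun _ => 0, tendsto_const_nhds, fun ν _ X hX h0 n hn => ?_⟩
    have := integral_normSum_sq ν X h0 hn
    simp [Cmom_two, this]

/-- At a fixed `p`, the `n^{u/2}`-scaled risk is a sum of normalised absolute moments. -/
lemma scaled_risk_eq {k d n : ℕ} {ε u : ℝ} (hk : 2 ≤ k) (hd1 : 1 ≤ d) (hd2 : d ≤ k - 1)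
    (hε : 0 < ε) (hn : 1 ≤ n) {p : Fin k → ℝ} (hp : p ∈ simplex k) :
    (n : ℝ≥0∞) ^ (u/2) * ∫⁻ y, ENNReal.ofReal (∑ i, |empEst k d n ε y i - p i| ^ u)
      ∂(Measure.pi fun _ : Fin n => marginal (schemeKernel k ε d) p)
    = ENNReal.ofReal (∑ i, Aconst k d ε ^ u * ∫ y, |normSum (cind k ε d p i) n y| ^ u
      ∂(Measure.pi fun _ : Fin n => marginal (schemeKernel k ε d) p)) := by
  have := isProbabilityMeasure_marginal (ε := ε) hk hd1 hd2 hp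
  have hn0 : (0:ℝ) < n := by exact_mod_cast hn
  have hA := Aconst_pos (k := k) (ε := ε) hd1 hd2 hε
  rw [← ofReal_integral_eq_lintegral_ofReal .of_finite
    (.of_forall fun y => Finset.sum_nonneg fun i _ => by positivity),
    ← ENNReal.ofReal_natCast, ENNReal.ofReal_rpow_of_pos hn0, ← ENNReal.ofReal_mul (by positivity),
    ← integral_const_mul]
  congr 1
  simp_rw [← integral_const_mul]
  rw [← integral_finsetSum _ fun _ _ => .of_finite]
  refine integral_congr_ae (.of_forall fun y => ?_)
  simp only
  rw [Finset.mul_sum]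
  refine Finset.sum_congr rfl fun i _ => ?_
  rw [empEst_sub hk hd1 hd2 hε hp i hn, abs_mul, abs_of_pos hA, abs_div,
    abs_of_nonneg (Real.sqrt_nonneg _), Real.mul_rpow hA.le (by positivity),
    Real.div_rpow (abs_nonneg _) (Real.sqrt_nonneg _), Real.sqrt_eq_rpow, ← Real.rpow_mul hn0.le,
    one_div_mul_eq_div]
  have : (n:ℝ) ^ (u / 2) ≠ 0 := (Real.rpow_pos_of_pos hn0 _).ne'
  field_simp

theorem statement3 (k : ℕ) (hk : 2 ≤ k) (ε u : ℝ) (hε : 0 < ε) (hu0 : 0 < u) (hu2 : u ≤ 2)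
    (dstar : ℕ) (hd : IsOptDstar k ε dstar) :
    Filter.Tendsto (fun n : ℕ =>
        (n : ℝ≥0∞) ^ (u/2) * risk k n u (schemeKernel k ε dstar) (empEst k dstar n ε))
      atTop (nhds (ENNReal.ofReal ((k:ℝ) * Cmom u * Mconst k ε dstar ^ (u/2)))) := by
  obtain ⟨hd1, hd2⟩ := Finset.mem_Icc.1 hd.1
  have hk0 : (0:ℝ) < k := by exact_mod_cast (by omega : 0 < k)
  have hA := Aconst_pos (k := k) (ε := ε) hd1 hd2 hε
  have hC : 0 ≤ Cmom u := integral_nonneg fun x => by positivity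
  set L : ℝ := (k:ℝ) * Cmom u * Mconst k ε dstar ^ (u/2) with hL
  set A := Aconst k dstar ε with hAdef
  have hdk : (0:ℝ) ≤ (dstar:ℝ) / k * (1 - dstar / k) := by
    have : (dstar:ℝ) / k ≤ 1 := by
      rw [div_le_one hk0]; exact_mod_cast (by omega : dstar ≤ k)
    exact mul_nonneg (by positivity) (by linarith)
  have hLA : L = A ^ u * Cmom u * (k * ((dstar:ℝ) / k * (1 - dstar / k)) ^ (u/2)) := by
    rw [hL, Mconst_eq hd1 hd2 hε, Real.mul_rpow (by positivity) hdk, ← Real.rpow_natCast,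
      ← Real.rpow_mul hA.le]
    have : ((2:ℕ):ℝ) * (u / 2) = u := by push_cast; ring
    rw [this]
    ring
  obtain ⟨δ, hδ, hclose⟩ := exists_moment_err hu0 hu2
  -- Uniform error between the scaled risk at `p` and its Gaussian limit.
  have hunif : ∀ n : ℕ, 1 ≤ n → ∀ p ∈ simplex k,
      |(∑ i, A ^ u * ∫ y, |normSum (cind k ε dstar p i) n y| ^ u
        ∂(Measure.pi fun _ : Fin n => marginal (schemeKernel k ε dstar) p))
      - A ^ u * Cmom u * ∑ i, (succProb k ε dstar p i * (1 - succProb k ε dstar p i)) ^ (u/2)|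
      ≤ k * A ^ u * δ n := by
    intro n hn p hp
    have := isProbabilityMeasure_marginal (ε := ε) hk hd1 hd2 hp
    rw [Finset.mul_sum, ← Finset.sum_sub_distrib]
    refine (Finset.abs_sum_le_sum_abs _ _).trans ?_
    have hi : ∀ i ∈ (Finset.univ : Finset (Fin k)),
        |A ^ u * ∫ y, |normSum (cind k ε dstar p i) n y| ^ u
          ∂(Measure.pi fun _ : Fin n => marginal (schemeKernel k ε dstar) p)
        - A ^ u * Cmom u * (succProb k ε dstar p i * (1 - succProb k ε dstar p i)) ^ (u/2)|
        ≤ A ^ u * δ n := fun i _ => by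
      obtain ⟨h1, h2, h3⟩ := cind_facts (ε := ε) hk hd1 hd2 hp i
      have h := hclose _ _ h1 h2 n hn
      rw [h3] at h
      rw [mul_assoc, ← mul_sub, abs_mul, abs_of_nonneg (by positivity)]
      gcongr
    refine (Finset.sum_le_sum hi).trans (le_of_eq ?_)
    simp
    ring
  have hη : Tendsto (fun n => k * A ^ u * δ n) atTop (nhds 0) := by
    simpa using hδ.const_mul (k * A ^ u)
  have hlo : Tendsto (fun n => ENNReal.ofReal (L - k * A ^ u * δ n)) atTop
      (nhds (ENNReal.ofReal L)) := by
    simpa using ENNReal.tendsto_ofReal (hη.const_sub L)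
  have hhi : Tendsto (fun n => ENNReal.ofReal (L + k * A ^ u * δ n)) atTop
      (nhds (ENNReal.ofReal L)) := by
    simpa using ENNReal.tendsto_ofReal (hη.const_add L)
  refine tendsto_of_tendsto_of_tendsto_of_le_of_le' hlo hhi ?_ ?_
  · filter_upwards [eventually_ge_atTop 1] with n hn
    -- The uniform distribution attains the limiting constant.
    have hp : (fun _ : Fin k => 1 / (k:ℝ)) ∈ simplex k :=
      ⟨fun _ => by positivity, by simp [hk0.ne']⟩
    set p : Fin k → ℝ := fun _ => 1 / (k:ℝ) with hpdef
    have hm : ∀ i, succProb k ε dstar p i = dstar / k := by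
      have hc : ∀ i j, succProb k ε dstar p i = succProb k ε dstar p j := fun i j => by
        have e1 := Aconst_mul_succProb hk hd1 hd2 hε hp i
        have e2 := Aconst_mul_succProb hk hd1 hd2 hε hp j
        exact mul_left_cancel₀ hA.ne' (by simp only [hpdef] at e1 e2 ⊢; linarith)
      intro i
      have hs := sum_succProb (ε := ε) hk hd1 hd2 hp
      rw [Finset.sum_congr rfl fun j _ => hc j i] at hs
      simp only [Finset.sum_const, Finset.card_univ, Fintype.card_fin, nsmul_eq_mul] at hs
      rw [eq_div_iff hk0.ne', mul_comm, hs]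
    have h := (abs_le.1 (hunif n hn p hp)).1
    simp only [hm, Finset.sum_const, Finset.card_univ, Fintype.card_fin, nsmul_eq_mul] at h
    rw [← hLA] at h
    refine (ENNReal.ofReal_le_ofReal (by linarith)).trans
      ((scaled_risk_eq hk hd1 hd2 hε hn hp).symm.le.trans ?_)
    gcongr
    exact le_iSup₂ (f := fun p (_ : p ∈ simplex k) =>
      ∫⁻ y, ENNReal.ofReal (∑ i, |empEst k dstar n ε y i - p i| ^ u)
        ∂(Measure.pi fun _ : Fin n => marginal (schemeKernel k ε dstar) p)) p hp
  · filter_upwards [eventually_ge_atTop 1] with n hn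
    rw [risk, ENNReal.mul_iSup]
    refine iSup_le fun p => ?_
    rw [ENNReal.mul_iSup]
    refine iSup_le fun hp => ?_
    rw [scaled_risk_eq hk hd1 hd2 hε hn hp]
    refine ENNReal.ofReal_le_ofReal ?_
    have h := (abs_le.1 (hunif n hn p hp)).2
    have hJ := sum_rpow_var_le (by omega) (by positivity : 0 ≤ u / 2) (by linarith)
      (succProb_mem (ε := ε) hk hd1 hd2 hp) (sum_succProb (ε := ε) hk hd1 hd2 hp)
    have := mul_le_mul_of_nonneg_left hJ (by positivity : 0 ≤ A ^ u * Cmom u)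
    rw [← hLA] at this
    linarith
end
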